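/- For every (d1,d2) ∈ ℝ₊², R(d1,d2) ≤ R_U*(d1,d2) ≤ max{ R^{WZ}_{X|Y}(d1), R^{WZ}_{Y|X}(d2) }; that is, the one-description upper bound R_U* is at least as tight an upper bound on the rate-distortion function as the compress-linear upper bound. -/

import Mathlib

open scoped BigOperators Classical

noncomputable section

namespace TWR

/-- Base-2 Shannon entropy of a finitely supported distribution (with the
convention `0 * log 0 = 0`, automatic since `Real.logb 2 0 = 0`). -/
def H2 {α : Type} [Fintype α] (p : α → ℝ) : ℝ :=
  -∑ a, p a * Real.logb 2 (p a)

/-- `p` is a probability mass function. -/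
def IsPmf {α : Type} [Fintype α] (p : α → ℝ) : Prop :=
  (∀ a, 0 ≤ p a) ∧ ∑ a, p a = 1

/-- `W` is a conditional pmf. -/
def IsCondPmf {α β : Type} [Fintype β] (W : α → β → ℝ) : Prop :=
  ∀ a, IsPmf (W a)

/-- Mutual information `I(A;B)` (base 2) of a joint pmf on `α × β`. -/
def MI {α β : Type} [Fintype α] [Fintype β] (p : α × β → ℝ) : ℝ :=
  H2 (fun a => ∑ b, p (a, b)) + H2 (fun b => ∑ a, p (a, b)) - H2 p

/-- Conditional entropy `H(A|B)` of a joint pmf on `α × β`. -/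
def condH {α β : Type} [Fintype α] [Fintype β] (p : α × β → ℝ) : ℝ :=
  H2 p - H2 (fun b => ∑ a, p (a, b))

/-- Conditional mutual information `I(A;C|B)` of a joint pmf on `α × β × γ`,
conditioning on the middle coordinate (`I(A;C|B) = H(A,B)+H(B,C)-H(A,B,C)-H(B)`). -/
def condMI {α β γ : Type} [Fintype α] [Fintype β] [Fintype γ] (p : α × β × γ → ℝ) : ℝ :=
  H2 (fun ab : α × β => ∑ c, p (ab.1, ab.2, c)) +
    H2 (fun bc : β × γ => ∑ a, p (a, bc.1, bc.2)) -
    H2 p - H2 (fun b : β => ∑ a, ∑ c, p (a, b, c))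

/-- Markov chain `A − B − C` for a joint pmf on `α × β × γ`. -/
def Markov {α β γ : Type} [Fintype α] [Fintype β] [Fintype γ] (p : α × β × γ → ℝ) : Prop :=
  ∀ a b c, p (a, b, c) * (∑ a', ∑ c', p (a', b, c')) =
    (∑ c', p (a, b, c')) * (∑ a', p (a', b, c))

variable {𝒳 𝒴 Xh Yh 𝒲 𝒰 𝒱 : Type}
variable [Fintype 𝒳] [Fintype 𝒴] [Fintype Xh] [Fintype Yh]
variable [Fintype 𝒲] [Fintype 𝒰] [Fintype 𝒱]

/-- The i.i.d. block source. -/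
def iid (q : 𝒳 × 𝒴 → ℝ) (n : ℕ) : (Fin n → 𝒳) × (Fin n → 𝒴) → ℝ :=
  fun xy => ∏ i, q (xy.1 i, xy.2 i)

/-- Average distortion at receiver 1 of the RD code `(f, g1, ·)`. -/
def Delta1 (q : 𝒳 × 𝒴 → ℝ) (δ1 : 𝒳 → Xh → ℝ) {n m : ℕ}
    (f : (Fin n → 𝒳) × (Fin n → 𝒴) → Fin m)
    (g1 : Fin m × (Fin n → 𝒴) → Fin n → Xh) : ℝ :=
  ∑ xy : (Fin n → 𝒳) × (Fin n → 𝒴),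
    iid q n xy * ((n : ℝ)⁻¹ * ∑ i, δ1 (xy.1 i) (g1 (f xy, xy.2) i))

/-- Average distortion at receiver 2 of the RD code `(f, ·, g2)`. -/
def Delta2 (q : 𝒳 × 𝒴 → ℝ) (δ2 : 𝒴 → Yh → ℝ) {n m : ℕ}
    (f : (Fin n → 𝒳) × (Fin n → 𝒴) → Fin m)
    (g2 : Fin m × (Fin n → 𝒳) → Fin n → Yh) : ℝ :=
  ∑ xy : (Fin n → 𝒳) × (Fin n → 𝒴),
    iid q n xy * ((n : ℝ)⁻¹ * ∑ i, δ2 (xy.2 i) (g2 (f xy, xy.1) i))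

/-- `r` is a `(d1,d2)`-achievable rate (source coding). -/
def RDAchievable (q : 𝒳 × 𝒴 → ℝ) (δ1 : 𝒳 → Xh → ℝ) (δ2 : 𝒴 → Yh → ℝ)
    (d1 d2 r : ℝ) : Prop :=
  ∀ ε > (0 : ℝ), ∃ (n m : ℕ) (f : (Fin n → 𝒳) × (Fin n → 𝒴) → Fin m)
    (g1 : Fin m × (Fin n → 𝒴) → Fin n → Xh)
    (g2 : Fin m × (Fin n → 𝒳) → Fin n → Yh),
    0 < n ∧ Real.logb 2 m / n ≤ r + ε ∧
    Delta1 q δ1 f g1 ≤ d1 + ε ∧ Delta2 q δ2 f g2 ≤ d2 + ε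

/-- The rate-distortion function `R(d1,d2)`. -/
def RD (q : 𝒳 × 𝒴 → ℝ) (δ1 : 𝒳 → Xh → ℝ) (δ2 : 𝒴 → Yh → ℝ) (d1 d2 : ℝ) : ℝ :=
  sInf {r : ℝ | 0 ≤ r ∧ RDAchievable q δ1 δ2 d1 d2 r}

/-- `r` is `(d1,d2)`-achievable with common reconstructions. -/
def CRAchievable (q : 𝒳 × 𝒴 → ℝ) (δ1 : 𝒳 → Xh → ℝ) (δ2 : 𝒴 → Yh → ℝ)
    (d1 d2 r : ℝ) : Prop :=
  ∀ ε > (0 : ℝ), ∃ (n m : ℕ) (f : (Fin n → 𝒳) × (Fin n → 𝒴) → Fin m)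
    (g1 : Fin m × (Fin n → 𝒴) → Fin n → Xh)
    (g2 : Fin m × (Fin n → 𝒳) → Fin n → Yh)
    (φ1 : Fin m × (Fin n → 𝒴) → Fin n → Yh)
    (φ2 : Fin m × (Fin n → 𝒳) → Fin n → Xh),
    0 < n ∧ Real.logb 2 m / n ≤ r + ε ∧
    Delta1 q δ1 f g1 ≤ d1 + ε ∧ Delta2 q δ2 f g2 ≤ d2 + ε ∧
    (∑ xy : (Fin n → 𝒳) × (Fin n → 𝒴),
      if φ2 (f xy, xy.1) = g1 (f xy, xy.2) then 0 else iid q n xy) ≤ ε ∧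
    (∑ xy : (Fin n → 𝒳) × (Fin n → 𝒴),
      if φ1 (f xy, xy.2) = g2 (f xy, xy.1) then 0 else iid q n xy) ≤ ε

/-- The common-reconstruction rate-distortion function `R_CR(d1,d2)`. -/
def CRRD (q : 𝒳 × 𝒴 → ℝ) (δ1 : 𝒳 → Xh → ℝ) (δ2 : 𝒴 → Yh → ℝ) (d1 d2 : ℝ) : ℝ :=
  sInf {r : ℝ | 0 ≤ r ∧ CRAchievable q δ1 δ2 d1 d2 r}

/-- The conditional rate-distortion function `R_{X|Y}(d1)`. -/
def condRD (q : 𝒳 × 𝒴 → ℝ) (δ1 : 𝒳 → Xh → ℝ) (d1 : ℝ) : ℝ :=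
  sInf {r : ℝ | ∃ W : 𝒳 × 𝒴 → Xh → ℝ, IsCondPmf W ∧
    (∑ x, ∑ y, ∑ xh, q (x, y) * W (x, y) xh * δ1 x xh) ≤ d1 ∧
    r = condMI (fun t : 𝒳 × 𝒴 × Xh => q (t.1, t.2.1) * W (t.1, t.2.1) t.2.2)}

/-- Swap the two components of a joint source. -/
def swap (q : 𝒳 × 𝒴 → ℝ) : 𝒴 × 𝒳 → ℝ := fun t => q (t.2, t.1)

/-- The marginal rate-distortion function `R_X(d)`. -/
def margRD (qX : 𝒳 → ℝ) (δ1 : 𝒳 → Xh → ℝ) (d1 : ℝ) : ℝ :=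
  sInf {r : ℝ | ∃ W : 𝒳 → Xh → ℝ, IsCondPmf W ∧
    (∑ x, ∑ xh, qX x * W x xh * δ1 x xh) ≤ d1 ∧
    r = MI (fun t : 𝒳 × Xh => qX t.1 * W t.1 t.2)}

def margX (q : 𝒳 × 𝒴 → ℝ) : 𝒳 → ℝ := fun x => ∑ y, q (x, y)
def margY (q : 𝒳 × 𝒴 → ℝ) : 𝒴 → ℝ := fun y => ∑ x, q (x, y)

/-- The joint rate-distortion function `R_{XY}(d1,d2)`. -/
def jointRD (q : 𝒳 × 𝒴 → ℝ) (δ1 : 𝒳 → Xh → ℝ) (δ2 : 𝒴 → Yh → ℝ) (d1 d2 : ℝ) : ℝ :=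
  sInf {r : ℝ | ∃ W : 𝒳 × 𝒴 → Xh × Yh → ℝ, IsCondPmf W ∧
    (∑ xy : 𝒳 × 𝒴, ∑ z : Xh × Yh, q xy * W xy z * δ1 xy.1 z.1) ≤ d1 ∧
    (∑ xy : 𝒳 × 𝒴, ∑ z : Xh × Yh, q xy * W xy z * δ2 xy.2 z.2) ≤ d2 ∧
    r = MI (fun t : (𝒳 × 𝒴) × (Xh × Yh) => q t.1 * W t.1 t.2)}

/-- The Wyner–Ziv rate-distortion function `R^{WZ}_{X|Y}(d1)`
(with auxiliary alphabet of cardinality `|𝒳| + 1`). -/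
def wzRD (q : 𝒳 × 𝒴 → ℝ) (δ1 : 𝒳 → Xh → ℝ) (d1 : ℝ) : ℝ :=
  sInf {r : ℝ | ∃ p : Fin (Fintype.card 𝒳 + 1) × 𝒳 × 𝒴 → ℝ, IsPmf p ∧
    (∀ x y, (∑ a, p (a, x, y)) = q (x, y)) ∧ Markov p ∧
    (∃ π1 : Fin (Fintype.card 𝒳 + 1) × 𝒴 → Xh,
      (∑ a, ∑ x, ∑ y, p (a, x, y) * δ1 x (π1 (a, y))) ≤ d1) ∧
    r = condMI (fun t : 𝒳 × 𝒴 × Fin (Fintype.card 𝒳 + 1) => p (t.2.2, t.1, t.2.1))}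

/-- The set over which the single-letter CR formula
`max{I(X;X̂,Ŷ|Y), I(Y;X̂,Ŷ|X)}` is minimised. -/
def crFormulaSet (q : 𝒳 × 𝒴 → ℝ) (δ1 : 𝒳 → Xh → ℝ) (δ2 : 𝒴 → Yh → ℝ)
    (d1 d2 : ℝ) : Set ℝ :=
  {r : ℝ | ∃ W : 𝒳 × 𝒴 → Xh × Yh → ℝ, IsCondPmf W ∧
    (∑ x, ∑ y, ∑ z : Xh × Yh, q (x, y) * W (x, y) z * δ1 x z.1) ≤ d1 ∧
    (∑ x, ∑ y, ∑ z : Xh × Yh, q (x, y) * W (x, y) z * δ2 y z.2) ≤ d2 ∧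
    r = max
      (condMI (fun t : 𝒳 × 𝒴 × (Xh × Yh) => q (t.1, t.2.1) * W (t.1, t.2.1) t.2.2))
      (condMI (fun t : 𝒴 × 𝒳 × (Xh × Yh) => q (t.2.1, t.1) * W (t.2.1, t.1) t.2.2))}

/-- Joint law of source blocks and channel outputs for a JSC encoder. -/
def jscP (q : 𝒳 × 𝒴 → ℝ) (qUV : 𝒲 → 𝒰 × 𝒱 → ℝ) {n m : ℕ}
    (f : (Fin n → 𝒳) × (Fin n → 𝒴) → Fin m → 𝒲)
    (x : Fin n → 𝒳) (y : Fin n → 𝒴) (u : Fin m → 𝒰) (v : Fin m → 𝒱) : ℝ :=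
  (∏ i, q (x i, y i)) * ∏ j, qUV (f (x, y) j) (u j, v j)

/-- `(d1,d2)` is achievable by joint source-channel coding with source rate `κs`
and channel rate `κc` (bandwidth expansion `κc/κs`). -/
def JSCAchievable (q : 𝒳 × 𝒴 → ℝ) (qUV : 𝒲 → 𝒰 × 𝒱 → ℝ)
    (δ1 : 𝒳 → Xh → ℝ) (δ2 : 𝒴 → Yh → ℝ) (κs κc d1 d2 : ℝ) : Prop :=
  ∀ ε > (0 : ℝ), ∃ (t n m : ℕ) (f : (Fin n → 𝒳) × (Fin n → 𝒴) → Fin m → 𝒲)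
    (g1 : (Fin m → 𝒰) × (Fin n → 𝒴) → Fin n → Xh)
    (g2 : (Fin m → 𝒱) × (Fin n → 𝒳) → Fin n → Yh),
    0 < t ∧ (n : ℝ) = κs * t ∧ (m : ℝ) = κc * t ∧
    (∑ x : Fin n → 𝒳, ∑ y : Fin n → 𝒴, ∑ u : Fin m → 𝒰, ∑ v : Fin m → 𝒱,
      jscP q qUV f x y u v * ((n : ℝ)⁻¹ * ∑ i, δ1 (x i) (g1 (u, y) i))) ≤ d1 + ε ∧
    (∑ x : Fin n → 𝒳, ∑ y : Fin n → 𝒴, ∑ u : Fin m → 𝒰, ∑ v : Fin m → 𝒱,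
      jscP q qUV f x y u v * ((n : ℝ)⁻¹ * ∑ i, δ2 (y i) (g2 (v, x) i))) ≤ d2 + ε

/-- `(d1,d2)` is achievable by joint source-channel coding with common
reconstructions, source rate `κs` and channel rate `κc`. -/
def CRJSCAchievable (q : 𝒳 × 𝒴 → ℝ) (qUV : 𝒲 → 𝒰 × 𝒱 → ℝ)
    (δ1 : 𝒳 → Xh → ℝ) (δ2 : 𝒴 → Yh → ℝ) (κs κc d1 d2 : ℝ) : Prop :=
  ∀ ε > (0 : ℝ), ∃ (t n m : ℕ) (f : (Fin n → 𝒳) × (Fin n → 𝒴) → Fin m → 𝒲)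
    (g1 : (Fin m → 𝒰) × (Fin n → 𝒴) → Fin n → Xh)
    (g2 : (Fin m → 𝒱) × (Fin n → 𝒳) → Fin n → Yh)
    (φ1 : (Fin m → 𝒰) × (Fin n → 𝒴) → Fin n → Yh)
    (φ2 : (Fin m → 𝒱) × (Fin n → 𝒳) → Fin n → Xh),
    0 < t ∧ (n : ℝ) = κs * t ∧ (m : ℝ) = κc * t ∧
    (∑ x : Fin n → 𝒳, ∑ y : Fin n → 𝒴, ∑ u : Fin m → 𝒰, ∑ v : Fin m → 𝒱,
      jscP q qUV f x y u v * ((n : ℝ)⁻¹ * ∑ i, δ1 (x i) (g1 (u, y) i))) ≤ d1 + ε ∧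
    (∑ x : Fin n → 𝒳, ∑ y : Fin n → 𝒴, ∑ u : Fin m → 𝒰, ∑ v : Fin m → 𝒱,
      jscP q qUV f x y u v * ((n : ℝ)⁻¹ * ∑ i, δ2 (y i) (g2 (v, x) i))) ≤ d2 + ε ∧
    (∑ x : Fin n → 𝒳, ∑ y : Fin n → 𝒴, ∑ u : Fin m → 𝒰, ∑ v : Fin m → 𝒱,
      if φ2 (v, x) = g1 (u, y) then 0 else jscP q qUV f x y u v) ≤ ε ∧
    (∑ x : Fin n → 𝒳, ∑ y : Fin n → 𝒴, ∑ u : Fin m → 𝒰, ∑ v : Fin m → 𝒱,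
      if φ1 (u, y) = g2 (v, x) then 0 else jscP q qUV f x y u v) ≤ ε

/-- `I(W;U)` under the joint law `pW · qUV` (U-marginal of the broadcast channel). -/
def chMIU (qUV : 𝒲 → 𝒰 × 𝒱 → ℝ) (pW : 𝒲 → ℝ) : ℝ :=
  MI (fun t : 𝒲 × 𝒰 => pW t.1 * ∑ v, qUV t.1 (t.2, v))

/-- `I(W;V)` under the joint law `pW · qUV` (V-marginal of the broadcast channel). -/
def chMIV (qUV : 𝒲 → 𝒰 × 𝒱 → ℝ) (pW : 𝒲 → ℝ) : ℝ :=
  MI (fun t : 𝒲 × 𝒱 => pW t.1 * ∑ u, qUV t.1 (u, t.2))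

/-- The doubly symmetric binary source with crossover probability `ρ`. -/
def dsbs (ρ : ℝ) : Bool × Bool → ℝ :=
  fun t => if t.1 = t.2 then (1 - ρ) / 2 else ρ / 2

/-- The Hamming distortion measure. -/
def dHam {α : Type} : α → α → ℝ := fun a b => if a = b then 0 else 1

/-- The binary entropy function (base 2). -/
def binEnt (x : ℝ) : ℝ := -(x * Real.logb 2 x) - (1 - x) * Real.logb 2 (1 - x)

/-- A difference distortion measure built from a per-letter function of the
(modular) difference. -/
def diffD {l : ℕ} (δ : Fin l → ℝ) : Fin l → Fin l → ℝ := fun a b => δ (a - b)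

/-- Capacity of the modulo-additive channel with noise `pN` and input
distortion constraint `d`. -/
def Cadd {l : ℕ} (δ : Fin l → ℝ) (d : ℝ) (pN : Fin l → ℝ) : ℝ :=
  sSup {r : ℝ | ∃ pW : Fin l → ℝ, IsPmf pW ∧ (∑ w, pW w * δ w) ≤ d ∧
    r = MI (fun t : Fin l × Fin l => pW t.1 * pN (t.2 - t.1))}

/-- The minimax (worst-noise) capacity under distortion constraint `d`. -/
def Cworst {l : ℕ} (δ : Fin l → ℝ) (d : ℝ) : ℝ :=
  sInf {r : ℝ | ∃ pN : Fin l → ℝ, IsPmf pN ∧ (∑ x, pN x * δ x) ≤ d ∧ r = Cadd δ d pN}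

/-- Wyner's common information `K(X;Y)` (auxiliary alphabet of size 4). -/
def wynerK (q : 𝒳 × 𝒴 → ℝ) : ℝ :=
  sInf {r : ℝ | ∃ W : 𝒳 × 𝒴 → Fin 4 → ℝ, IsCondPmf W ∧
    Markov (fun t : 𝒳 × Fin 4 × 𝒴 => q (t.1, t.2.2) * W (t.1, t.2.2) t.2.1) ∧
    r = MI (fun t : (𝒳 × 𝒴) × Fin 4 => q t.1 * W t.1 t.2)}

/-- The one-description (Kimura–Uyematsu) upper bound `R_U*(d1,d2)`. -/
def oneDescUB (q : 𝒳 × 𝒴 → ℝ) (δ1 : 𝒳 → Xh → ℝ) (δ2 : 𝒴 → Yh → ℝ) (d1 d2 : ℝ) : ℝ :=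
  sInf {r : ℝ | ∃ W : 𝒳 × 𝒴 → Fin (Fintype.card 𝒳 * Fintype.card 𝒴 + 2) → ℝ,
    IsCondPmf W ∧
    (∃ π1 : Fin (Fintype.card 𝒳 * Fintype.card 𝒴 + 2) × 𝒴 → Xh,
      (∑ x, ∑ y, ∑ c, q (x, y) * W (x, y) c * δ1 x (π1 (c, y))) ≤ d1) ∧
    (∃ π2 : Fin (Fintype.card 𝒳 * Fintype.card 𝒴 + 2) × 𝒳 → Yh,
      (∑ x, ∑ y, ∑ c, q (x, y) * W (x, y) c * δ2 y (π2 (c, x))) ≤ d2) ∧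
    r = max
      (condMI (fun t : 𝒳 × 𝒴 × Fin (Fintype.card 𝒳 * Fintype.card 𝒴 + 2) =>
        q (t.1, t.2.1) * W (t.1, t.2.1) t.2.2))
      (condMI (fun t : 𝒴 × 𝒳 × Fin (Fintype.card 𝒳 * Fintype.card 𝒴 + 2) =>
        q (t.2.1, t.1) * W (t.2.1, t.1) t.2.2))}

end TWR

section partA

theorem lp_basic {I J : Type} [Fintype I] [Fintype J] (N : I → J → ℝ) (e : J → ℝ)
    (he : ∀ i, 0 < ∑ j, e j * N i j) (o : I → ℝ) :
    ∀ (k : ℕ) (w0 : I → ℝ), (∀ i, 0 ≤ w0 i) →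
      (Finset.univ.filter (fun i => w0 i ≠ 0)).card ≤ k →
      ∃ w : I → ℝ, (∀ i, 0 ≤ w i) ∧ (∀ i, w0 i = 0 → w i = 0) ∧
        (∀ j, ∑ i, w i * N i j = ∑ i, w0 i * N i j) ∧
        ∑ i, w i * o i ≤ ∑ i, w0 i * o i ∧
        (∀ d : I → ℝ, (∀ i, w i = 0 → d i = 0) → (∀ j, ∑ i, d i * N i j = 0) →
          ∀ i, d i = 0) := by
  intro k
  induction k with
  | zero =>
    intro w0 h0 hc
    refine ⟨w0, h0, fun _ h => h, fun _ => rfl, le_rfl, fun d hd _ i => hd i ?_⟩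
    by_contra hi
    have : i ∈ Finset.univ.filter (fun i => w0 i ≠ 0) := by simp [hi]
    rw [Finset.card_eq_zero.mp (Nat.le_zero.mp hc)] at this
    simp at this
  | succ k ih =>
    intro w0 h0 hc
    by_cases hdone : ∀ d : I → ℝ, (∀ i, w0 i = 0 → d i = 0) →
        (∀ j, ∑ i, d i * N i j = 0) → ∀ i, d i = 0
    · exact ⟨w0, h0, fun _ h => h, fun _ => rfl, le_rfl, hdone⟩
    push Not at hdone
    have key : ∃ d : I → ℝ, (∀ i, w0 i = 0 → d i = 0) ∧
        (∀ j, ∑ i, d i * N i j = 0) ∧ (∃ i, d i ≠ 0) ∧ ∑ i, d i * o i ≤ 0 := by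
      obtain ⟨d, h1, h2, h3⟩ := hdone
      rcases le_total (∑ i, d i * o i) 0 with h | h
      · exact ⟨d, h1, h2, h3, h⟩
      · refine ⟨fun i => - d i, fun i hi => by simp [h1 i hi], fun j => ?_, ?_, ?_⟩
        · simp [h2 j]
        · simpa using h3
        · simpa using h
    obtain ⟨d, hd0, hdN, ⟨i1, hi1⟩, hdo⟩ := key
    have hsum : ∑ i, d i * (∑ j, e j * N i j) = 0 := by
      have : ∑ i, d i * (∑ j, e j * N i j) = ∑ j, e j * ∑ i, d i * N i j := by
        simp only [Finset.mul_sum]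
        rw [Finset.sum_comm]
        refine Finset.sum_congr rfl fun j _ => Finset.sum_congr rfl fun i _ => by ring
      rw [this]; simp [hdN]
    have hneg : ∃ i, d i < 0 := by
      by_contra hcon
      push Not at hcon
      have := (Finset.sum_eq_zero_iff_of_nonneg
        (fun i _ => mul_nonneg (hcon i) (he i).le)).mp hsum i1 (Finset.mem_univ _)
      rcases mul_eq_zero.mp this with h | h
      · exact hi1 h
      · exact absurd h (he i1).ne'
    have hne : (Finset.univ.filter (fun i => d i < 0)).Nonempty := by
      obtain ⟨i, hi⟩ := hneg
      exact ⟨i, by simp [hi]⟩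
    obtain ⟨m, hm, hmin⟩ := Finset.exists_min_image _ (fun i => w0 i / (- d i)) hne
    have hdm : d m < 0 := by simpa using hm
    set t := w0 m / (- d m) with ht
    have ht0 : 0 ≤ t := div_nonneg (h0 m) (by linarith)
    have hw1 : ∀ i, 0 ≤ w0 i + t * d i := by
      intro i
      rcases lt_or_ge (d i) 0 with h | h
      · have := hmin i (by simp [h])
        have h2 : 0 < - d i := by linarith
        have := (le_div_iff₀ h2).mp this
        linarith
      · have := mul_nonneg ht0 h
        have := h0 i
        linarith
    have hzm : w0 m + t * d m = 0 := by
      have := hdm.ne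
      rw [ht]; field_simp; simp
    have hw0m : w0 m ≠ 0 := fun h => hdm.ne (hd0 m h)
    have hz : ∀ i, w0 i = 0 → w0 i + t * d i = 0 := fun i hi => by simp [hi, hd0 i hi]
    have hcard : (Finset.univ.filter (fun i => w0 i + t * d i ≠ 0)).card ≤ k := by
      have : (Finset.univ.filter (fun i => w0 i + t * d i ≠ 0)).card <
          (Finset.univ.filter (fun i => w0 i ≠ 0)).card := by
        apply Finset.card_lt_card
        rw [Finset.ssubset_iff_of_subset]
        · exact ⟨m, by simp [hw0m], by simp [hzm]⟩
        · intro i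
          simp only [Finset.mem_filter, Finset.mem_univ, true_and]
          exact fun h h' => h (hz i h')
      omega
    obtain ⟨w, a1, a2, a3, a4, a5⟩ := ih (fun i => w0 i + t * d i) hw1 hcard
    refine ⟨w, a1, fun i hi => a2 i (hz i hi), fun j => ?_, ?_, a5⟩
    · rw [a3 j]
      simp only [add_mul, Finset.sum_add_distrib, mul_assoc, ← Finset.mul_sum, hdN j]
      simp
    · refine a4.trans ?_
      simp only [add_mul, Finset.sum_add_distrib, mul_assoc, ← Finset.mul_sum]
      nlinarith

theorem sum_supp {I : Type} [Fintype I] (w F : I → ℝ) (h : ∀ i, w i = 0 → F i = 0) :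
    ∑ i, F i = ∑ i : {i // w i ≠ 0}, F i := by
  symm
  refine Fintype.sum_of_injective Subtype.val Subtype.val_injective _ _ ?_ (fun i => rfl)
  intro i hi
  apply h
  by_contra hc
  exact hi ⟨⟨i, hc⟩, rfl⟩

theorem lp_card {I J : Type} [Fintype I] [Fintype J] (N : I → J → ℝ) (w : I → ℝ)
    (h : ∀ d : I → ℝ, (∀ i, w i = 0 → d i = 0) → (∀ j, ∑ i, d i * N i j = 0) →
          ∀ i, d i = 0) : Fintype.card {i // w i ≠ 0} ≤ Fintype.card J := by
  let L : ({i // w i ≠ 0} → ℝ) →ₗ[ℝ] (J → ℝ) :=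
    { toFun := fun v j => ∑ i, v i * N i j
      map_add' := fun u v => by
        ext j; simp [add_mul, Finset.sum_add_distrib]
      map_smul' := fun c v => by
        ext j; simp [mul_assoc, Finset.mul_sum] }
  have hL : Function.Injective L := by
    rw [← LinearMap.ker_eq_bot, LinearMap.ker_eq_bot']
    intro v hv
    have := h (fun i => if hi : w i ≠ 0 then v ⟨i, hi⟩ else 0) (fun i hi => by simp [hi])
      (fun j => by
        have hj := congrFun hv j
        simp only [L, LinearMap.coe_mk, AddHom.coe_mk, Pi.zero_apply] at hj
        refine Eq.trans ?_ hj
        rw [sum_supp w _ (fun i hi => by simp [hi])]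
        exact Finset.sum_congr rfl fun i _ => by rw [dif_pos i.2])
    ext i
    have hi := this i
    rw [dif_pos i.2] at hi
    exact hi
  have := LinearMap.finrank_le_finrank_of_injective hL
  simpa using this

end partA


section partA2

theorem slope_exists {M : Type} [Fintype M] (p r : M → ℝ)
    (h0 : ∀ m, p m = 0 → 0 ≤ r m)
    (h1 : ∀ m m', 0 < p m → p m' < 0 → 0 ≤ p m * r m' - p m' * r m) :
    ∃ j : ℝ, ∀ m, j * p m ≤ r m := by
  by_cases hn : (Finset.univ.filter (fun m => p m < 0)).Nonempty
  · obtain ⟨m0, hm0, hmax⟩ := Finset.exists_max_image _ (fun m => r m / p m) hn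
    have hp0 : p m0 < 0 := by simpa using hm0
    refine ⟨r m0 / p m0, fun m => ?_⟩
    rcases lt_trichotomy (p m) 0 with h | h | h
    · have := hmax m (by simp [h])
      have h2 := mul_le_mul_of_nonpos_right this h.le
      rwa [div_mul_cancel₀ _ h.ne] at h2
    · rw [h, mul_zero]; exact h0 m h
    · have := h1 m m0 h hp0
      rw [div_mul_eq_mul_div, div_le_iff_of_neg hp0]
      nlinarith
  · by_cases hn' : (Finset.univ.filter (fun m => 0 < p m)).Nonempty
    · obtain ⟨m0, hm0, hmin⟩ := Finset.exists_min_image _ (fun m => r m / p m) hn'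
      refine ⟨r m0 / p m0, fun m => ?_⟩
      rcases lt_trichotomy (p m) 0 with h | h | h
      · exact absurd ⟨m, by simp [h]⟩ hn
      · rw [h, mul_zero]; exact h0 m h
      · have := hmin m (by simp [h])
        exact (le_div_iff₀ h).mp this
    · refine ⟨0, fun m => ?_⟩
      rw [zero_mul]
      apply h0
      rcases lt_trichotomy (p m) 0 with h | h | h
      · exact absurd ⟨m, by simp [h]⟩ hn
      · exact h
      · exact absurd ⟨m, by simp [h]⟩ hn'

theorem multiplier {B : Type} [Fintype B] (zf zg : B → ℝ) (t1 t2 : ℝ) (ht1 : t1 < 0)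
    (ht2 : 0 < t2) : ∃ (s : B → ℝ) (j : ℝ), (∀ b, t1 ≤ s b ∧ s b ≤ t2) ∧
      ∑ b, zg b * s b = 0 ∧ ∀ b, (0 < zf b - j * zg b → s b = t1) ∧
        (zf b - j * zg b < 0 → s b = t2) := by
  have hcomp : IsCompact ((Set.Icc (fun _ : B => t1) (fun _ => t2)) ∩
      {s | ∑ b, zg b * s b = 0}) := by
    apply IsCompact.inter_right isCompact_Icc
    exact isClosed_eq (by fun_prop) continuous_const
  have hne : ((Set.Icc (fun _ : B => t1) (fun _ => t2)) ∩
      {s | ∑ b, zg b * s b = 0}).Nonempty :=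
    ⟨0, ⟨fun _ => ht1.le, fun _ => ht2.le⟩, by simp⟩
  obtain ⟨s, ⟨⟨hs1, hs2⟩, hs0⟩, hmin⟩ := hcomp.exists_isMinOn hne
    (f := fun s => ∑ b, zf b * s b) (by fun_prop)
  have hs0' : ∑ b, zg b * s b = 0 := hs0
  have hdir : ∀ d : B → ℝ, (∀ b, s b = t2 → d b ≤ 0) → (∀ b, s b = t1 → 0 ≤ d b) →
      ∑ b, zg b * d b = 0 → 0 ≤ ∑ b, zf b * d b := by
    intro d hd2 hd1 hg
    have hev : ∀ᶠ ε in nhdsWithin (0 : ℝ) (Set.Ioi 0), ∀ b, t1 ≤ s b + ε * d b ∧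
        s b + ε * d b ≤ t2 := by
      rw [Filter.eventually_all]
      intro b
      have hc : Filter.Tendsto (fun ε : ℝ => s b + ε * d b) (nhdsWithin 0 (Set.Ioi 0))
          (nhds (s b)) := by
        have : Filter.Tendsto (fun ε : ℝ => s b + ε * d b) (nhds 0)
          (nhds (s b + 0 * d b)) := by
          apply Continuous.tendsto; fun_prop
        simp only [zero_mul, add_zero] at this
        exact this.mono_left nhdsWithin_le_nhds
      refine Filter.Eventually.and ?_ ?_
      · rcases (hs1 b).eq_or_lt with h | h
        · filter_upwards [self_mem_nhdsWithin] with ε hε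
          have := mul_nonneg (le_of_lt hε) (hd1 b h.symm)
          have h' : t1 = s b := h
          linarith
        · filter_upwards [hc.eventually (lt_mem_nhds h)] with ε hε using hε.le
      · rcases (hs2 b).eq_or_lt with h | h
        · filter_upwards [self_mem_nhdsWithin] with ε hε
          have := mul_nonneg (le_of_lt hε) (neg_nonneg.mpr (hd2 b h))
          have h' : s b = t2 := h
          linarith
        · filter_upwards [hc.eventually (gt_mem_nhds h)] with ε hε using hε.le
    obtain ⟨ε, hε, hε0⟩ := (hev.and self_mem_nhdsWithin).exists
    have hε0' : (0 : ℝ) < ε := hε0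
    have hmem : (fun b => s b + ε * d b) ∈ (Set.Icc (fun _ : B => t1) (fun _ => t2)) ∩
      {s | ∑ b, zg b * s b = 0} := by
      refine ⟨⟨fun b => (hε b).1, fun b => (hε b).2⟩, ?_⟩
      show ∑ b, zg b * (s b + ε * d b) = 0
      have : ∑ b, zg b * (s b + ε * d b) = ∑ b, zg b * s b + ε * ∑ b, zg b * d b := by
        rw [Finset.mul_sum, ← Finset.sum_add_distrib]
        exact Finset.sum_congr rfl fun b _ => by ring
      rw [this, hg, hs0']; simp
    have := hmin hmem
    have h2 : ∑ b, zf b * (s b + ε * d b) = ∑ b, zf b * s b + ε * ∑ b, zf b * d b := by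
      rw [Finset.mul_sum, ← Finset.sum_add_distrib]
      exact Finset.sum_congr rfl fun b _ => by ring
    simp only [Set.mem_ofPred_eq] at this
    rw [h2] at this
    have h3 : 0 ≤ ε * ∑ b, zf b * d b := by linarith
    exact nonneg_of_mul_nonneg_right h3 hε0'
  let ok : B × Bool → Prop := fun m => if m.2 then s m.1 < t2 else t1 < s m.1
  let σ : Bool → ℝ := fun b => if b then 1 else -1
  have hsingle : ∀ (z : B → ℝ) (b : B) (c : ℝ), ∑ b', z b' * (Pi.single b c : B → ℝ) b' = z b * c := by
    intro z b c
    rw [Finset.sum_eq_single b] <;> simp +contextual [Pi.single_apply]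
  have hokd : ∀ (m : B × Bool), ok m → ∀ c : ℝ, 0 ≤ c →
      (∀ b, s b = t2 → (Pi.single m.1 (c * σ m.2) : B → ℝ) b ≤ 0) ∧
      (∀ b, s b = t1 → 0 ≤ (Pi.single m.1 (c * σ m.2) : B → ℝ) b) := by
    rintro ⟨b0, τ⟩ hm c hc
    refine ⟨fun b hb => ?_, fun b hb => ?_⟩
    · by_cases hbb : b = b0
      · subst hbb
        cases τ
        · simp [σ, hc]
        · simp [ok, hb] at hm
      · simp [Pi.single_apply, hbb]
    · by_cases hbb : b = b0
      · subst hbb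
        cases τ
        · simp [ok, hb] at hm
        · simp [σ, hc]
      · simp [Pi.single_apply, hbb]
  obtain ⟨j, hj⟩ := slope_exists (M := {m // ok m}) (fun m => zg m.1.1 * σ m.1.2)
    (fun m => zf m.1.1 * σ m.1.2)
    (by
      rintro ⟨m, hm⟩ hp
      have h := hokd m hm 1 zero_le_one
      have := hdir _ h.1 h.2 (by rw [hsingle, one_mul]; exact hp)
      rwa [hsingle, one_mul] at this)
    (by
      rintro ⟨m, hm⟩ ⟨m', hm'⟩ hp hp'
      simp only at hp hp' ⊢
      have h := hokd m hm (-(zg m'.1 * σ m'.2)) (by linarith)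
      have h' := hokd m' hm' (zg m.1 * σ m.2) (by linarith)
      have := hdir (Pi.single m.1 (-(zg m'.1 * σ m'.2) * σ m.2) +
        Pi.single m'.1 (zg m.1 * σ m.2 * σ m'.2))
        (fun b hb => add_nonpos (h.1 b hb) (h'.1 b hb))
        (fun b hb => add_nonneg (h.2 b hb) (h'.2 b hb))
        (by
          simp only [Pi.add_apply, mul_add, Finset.sum_add_distrib, hsingle]
          ring)
      simp only [Pi.add_apply, mul_add, Finset.sum_add_distrib, hsingle] at this
      linarith)
  refine ⟨s, j, fun b => ⟨hs1 b, hs2 b⟩, hs0, fun b => ⟨fun hb => ?_, fun hb => ?_⟩⟩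
  · by_contra hc
    have := hj ⟨(b, false), by
      show (if false = true then s b < t2 else t1 < s b)
      simpa using lt_of_le_of_ne (hs1 b) (Ne.symm hc)⟩
    simp [σ] at this
    linarith
  · by_contra hc
    have := hj ⟨(b, true), by
      show (if true = true then s b < t2 else t1 < s b)
      simpa using lt_of_le_of_ne (hs2 b) hc⟩
    simp [σ] at this
    linarith

end partA2


section partA3

theorem li_solve {A X : Type} [Fintype A] [Fintype X] (α : A → X → ℝ)
    (hLI : ∀ c : A → ℝ, (∀ x, ∑ a, c a * α a x = 0) → ∀ a, c a = 0) (ξ : A → ℝ) :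
    ∃ h : X → ℝ, ∀ a, ∑ x, h x * α a x = ξ a := by
  have hli : LinearIndependent ℝ α := by
    rw [Fintype.linearIndependent_iff]
    intro c hc
    apply hLI
    intro x
    have := congrFun hc x
    simpa [Finset.sum_apply] using this
  let b := Module.Basis.span hli
  obtain ⟨L, hL⟩ := LinearMap.exists_extend (b.constr ℝ ξ)
  refine ⟨fun x => L (Pi.single x 1), fun a => ?_⟩
  have h1 : L (α a) = ξ a := by
    have h2 : (b a : X → ℝ) = α a := by
      simp only [b, Module.Basis.span_apply]
    rw [← h2]
    have h3 := LinearMap.congr_fun hL (b a)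
    simp only [LinearMap.comp_apply, Submodule.subtype_apply] at h3
    rw [h3, Module.Basis.constr_basis]
  rw [← h1]
  conv_rhs => rw [← Finset.univ_sum_single (α a)]
  rw [map_sum]
  refine Finset.sum_congr rfl fun x _ => ?_
  have : (Pi.single x (α a x) : X → ℝ) = (α a x) • Pi.single x 1 := by
    ext z; by_cases hz : z = x
    · subst hz; simp
    · simp [hz]
  rw [this, map_smul, smul_eq_mul, mul_comm]

theorem rep_lin {A B X Y : Type} [Fintype A] [Fintype B] [Fintype X] [Fintype Y]
    (α : A → X → ℝ) (β : B → Y → ℝ) (sα : ∀ x, ∑ a, α a x = 1)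
    (w : A × B → ℝ) (hw : ∀ x y, ∑ i, w i * (α i.1 x * β i.2 y) = 1) (h : Y → X → ℝ) :
    ∑ i, w i * ∑ y, β i.2 y * ∑ x, h y x * α i.1 x = ∑ a, ∑ y, ∑ x, h y x * α a x := by
  have e1 : ∑ i, w i * ∑ y, β i.2 y * ∑ x, h y x * α i.1 x =
      ∑ y, ∑ x, h y x * ∑ i, w i * (α i.1 x * β i.2 y) := by
    simp only [Finset.mul_sum]
    rw [Finset.sum_comm]
    refine Finset.sum_congr rfl fun y _ => ?_
    rw [Finset.sum_comm]
    refine Finset.sum_congr rfl fun x _ => Finset.sum_congr rfl fun i _ => by ring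
  have e2 : ∑ a, ∑ y, ∑ x, h y x * α a x = ∑ y, ∑ x, h y x * ∑ a, α a x := by
    simp only [Finset.mul_sum]
    rw [Finset.sum_comm]
    refine Finset.sum_congr rfl fun y _ => ?_
    rw [Finset.sum_comm]
  rw [e1, e2]
  simp only [hw, sα]

theorem rep_LI {A B X Y : Type} [Fintype A] [Fintype B] [Fintype X] [Fintype Y]
    (α : A → X → ℝ) (β : B → Y → ℝ) (sα : ∀ x, ∑ a, α a x = 1)
    (hLI : ∀ c : A → ℝ, (∀ x, ∑ a, c a * α a x = 0) → ∀ a, c a = 0)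
    (w : A × B → ℝ) (hw : ∀ x y, ∑ i, w i * (α i.1 x * β i.2 y) = 1) (ξ : A → Y → ℝ) :
    ∑ i, w i * ∑ y, β i.2 y * ξ i.1 y = ∑ a, ∑ y, ξ a y := by
  choose h hh using fun y => li_solve α hLI (fun a => ξ a y)
  have := rep_lin α β sα w hw h
  simpa only [hh] using this

theorem rep_dep {A B X Y : Type} [Fintype A] [Fintype B] [Fintype X] [Fintype Y]
    (α : A → X → ℝ) (β : B → Y → ℝ) (sα : ∀ x, ∑ a, α a x = 1)
    (sβ : ∀ y, ∑ b, β b y = 1) (θ : A → ℝ) (hθ : ∀ x, ∑ a, θ a * α a x = 0)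
    (as : A)
    (hLI : ∀ c : A → ℝ, c as = 0 → (∀ x, ∑ a, c a * α a x = 0) → ∀ a, c a = 0)
    (w : A × B → ℝ) (hw : ∀ x y, ∑ i, w i * (α i.1 x * β i.2 y) = 1) (ξ : A → Y → ℝ) :
    θ as * (∑ i, w i * ∑ y, β i.2 y * ξ i.1 y - ∑ a, ∑ y, ξ a y) =
      ∑ b, (w (as, b) - 1) * ∑ y, β b y * ∑ a, θ a * ξ a y := by
  have hLI' : ∀ c : {a // a ≠ as} → ℝ, (∀ x, ∑ a, c a * α a x = 0) → ∀ a, c a = 0 := by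
    intro c hc a
    have := hLI (fun a => if h : a ≠ as then c ⟨a, h⟩ else 0) (by simp) (fun x => by
      refine Eq.trans ?_ (hc x)
      symm
      refine Fintype.sum_of_injective Subtype.val Subtype.val_injective _ _ ?_
        (fun i => by rw [dif_pos i.2])
      intro i hi
      have : ¬ (i ≠ as) := fun h => hi ⟨⟨i, h⟩, rfl⟩
      rw [dif_neg this, zero_mul]) a
    rwa [dif_pos a.2] at this
  choose h hh using fun y => li_solve (fun (a : {a // a ≠ as}) => α a) hLI' (fun a => ξ a y)
  let r : A → Y → ℝ := fun a y => ξ a y - ∑ x, h y x * α a x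
  have hr0 : ∀ a y, a ≠ as → r a y = 0 := by
    intro a y ha
    have := hh y ⟨a, ha⟩
    simp only [r]; simp only at this; rw [this]; ring
  have hrs : ∀ y, θ as * r as y = ∑ a, θ a * ξ a y := by
    intro y
    have e1 : ∑ a, θ a * r a y = θ as * r as y :=
      Finset.sum_eq_single as (fun a _ ha => by rw [hr0 a y ha, mul_zero]) (by simp)
    have e2 : ∑ a, θ a * ∑ x, h y x * α a x = 0 := by
      simp only [Finset.mul_sum]
      rw [Finset.sum_comm]
      apply Finset.sum_eq_zero
      intro x _
      have : ∑ a, θ a * (h y x * α a x) = h y x * ∑ a, θ a * α a x := by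
        rw [Finset.mul_sum]; exact Finset.sum_congr rfl fun a _ => by ring
      rw [this, hθ, mul_zero]
    rw [← e1]
    simp only [r, mul_sub, Finset.sum_sub_distrib, e2, sub_zero]
  have hlin := rep_lin α β sα w hw h
  have e3 : ∑ i, w i * ∑ y, β i.2 y * ξ i.1 y - ∑ a, ∑ y, ξ a y =
      ∑ i, w i * ∑ y, β i.2 y * r i.1 y - ∑ a, ∑ y, r a y := by
    simp only [r, mul_sub, Finset.sum_sub_distrib]
    rw [hlin]; ring
  have e4 : ∑ i, w i * ∑ y, β i.2 y * r i.1 y = ∑ b, w (as, b) * ∑ y, β b y * r as y := by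
    rw [Fintype.sum_prod_type]
    refine Finset.sum_eq_single as (fun a _ ha => ?_) (by simp)
    simp [hr0 a _ ha]
  have e5 : ∑ a, ∑ y, r a y = ∑ y, r as y :=
    Finset.sum_eq_single as (fun a _ ha => by simp [hr0 a _ ha]) (by simp)
  have e6 : ∑ y, r as y = ∑ b, ∑ y, β b y * r as y := by
    rw [Finset.sum_comm]
    refine Finset.sum_congr rfl fun y _ => ?_
    rw [← Finset.sum_mul, sβ, one_mul]
  rw [e3, e4, e5, e6, ← Finset.sum_sub_distrib, Finset.mul_sum]
  refine Finset.sum_congr rfl fun b _ => ?_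
  simp only [← hrs]
  have : ∑ y, β b y * (θ as * r as y) = θ as * ∑ y, β b y * r as y := by
    rw [Finset.mul_sum]; exact Finset.sum_congr rfl fun y _ => by ring
  rw [this]; ring

theorem lp_stage {A B X Y : Type} [Fintype A] [Fintype B] [Fintype X] [Fintype Y]
    (α : A → X → ℝ) (β : B → Y → ℝ)
    (hα1 : ∀ a, 0 < ∑ x, α a x) (hβ1 : ∀ b, 0 < ∑ y, β b y)
    (r1 r2 o : A × B → ℝ) (w0 : A × B → ℝ) (h0 : ∀ i, 0 ≤ w0 i)
    (hw0 : ∀ x y, ∑ i, w0 i * (α i.1 x * β i.2 y) = 1) :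
    ∃ w : A × B → ℝ, (∀ i, 0 ≤ w i) ∧ (∀ i, w0 i = 0 → w i = 0) ∧
      (∀ x y, ∑ i, w i * (α i.1 x * β i.2 y) = 1) ∧
      Fintype.card {i // w i ≠ 0} ≤ Fintype.card X * Fintype.card Y + 2 ∧
      ∑ i, w i * r1 i = ∑ i, w0 i * r1 i ∧ ∑ i, w i * r2 i = ∑ i, w0 i * r2 i ∧
      ∑ i, w i * o i ≤ ∑ i, w0 i * o i := by
  let N : A × B → (X × Y) ⊕ Bool → ℝ := fun i j => match j with
    | Sum.inl p => α i.1 p.1 * β i.2 p.2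
    | Sum.inr b => if b then r1 i else r2 i
  let e : (X × Y) ⊕ Bool → ℝ := fun j => match j with
    | Sum.inl _ => 1
    | Sum.inr _ => 0
  obtain ⟨w, a1, a2, a3, a4, a5⟩ := lp_basic N e (by
    intro i
    rw [Fintype.sum_sum_type]
    simp only [e, N, one_mul, zero_mul, Finset.sum_const_zero, add_zero]
    rw [Fintype.sum_prod_type]
    simp only [← Finset.mul_sum, ← Finset.sum_mul]
    exact mul_pos (hα1 _) (hβ1 _)) o _ w0 h0 le_rfl
  refine ⟨w, a1, a2, fun x y => ?_, ?_, ?_, ?_, a4⟩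
  · have := a3 (Sum.inl (x, y))
    simp only [N] at this
    rw [this, hw0]
  · have := lp_card N w a5
    simpa using this
  · simpa [N] using a3 (Sum.inr true)
  · simpa [N] using a3 (Sum.inr false)

theorem reduce_core {A B X Y : Type} [Fintype A] [Fintype B] [Fintype X] [Fintype Y]
    (α : A → X → ℝ) (β : B → Y → ℝ) (f1 g1 : A → Y → ℝ) (f2 g2 : B → X → ℝ)
    (hα1 : ∀ a, 0 < ∑ x, α a x) (hβ1 : ∀ b, 0 < ∑ y, β b y)
    (sα : ∀ x, ∑ a, α a x = 1) (sβ : ∀ y, ∑ b, β b y = 1)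
    (hLI : ∀ c : A → ℝ, (∀ x, ∑ a, c a * α a x = 0) → ∑ a, c a * ∑ y, g1 a y = 0 →
      ∀ a, c a = 0) :
    ∃ w : A × B → ℝ, (∀ i, 0 ≤ w i) ∧
      (∀ x y, ∑ i, w i * (α i.1 x * β i.2 y) = 1) ∧
      Fintype.card {i // w i ≠ 0} ≤ Fintype.card X * Fintype.card Y + 2 ∧
      ∑ i, w i * ∑ y, β i.2 y * f1 i.1 y ≤ ∑ a, ∑ y, f1 a y ∧
      ∑ i, w i * ∑ y, β i.2 y * g1 i.1 y ≤ ∑ a, ∑ y, g1 a y ∧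
      ∑ i, w i * ∑ x, α i.1 x * f2 i.2 x ≤ ∑ b, ∑ x, f2 b x ∧
      ∑ i, w i * ∑ x, α i.1 x * g2 i.2 x ≤ ∑ b, ∑ x, g2 b x := by
  have hone : ∀ k : B → X → ℝ, ∑ i : A × B, ∑ x, α i.1 x * k i.2 x = ∑ b, ∑ x, k b x := by
    intro k
    rw [Fintype.sum_prod_type, Finset.sum_comm]
    refine Finset.sum_congr rfl fun b _ => ?_
    rw [Finset.sum_comm]
    refine Finset.sum_congr rfl fun x _ => ?_
    simp only [← Finset.sum_mul, sα, one_mul]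
  have hone1 : ∀ k : A → Y → ℝ, ∑ i : A × B, ∑ y, β i.2 y * k i.1 y = ∑ a, ∑ y, k a y := by
    intro k
    rw [Fintype.sum_prod_type]
    refine Finset.sum_congr rfl fun b _ => ?_
    rw [Finset.sum_comm]
    refine Finset.sum_congr rfl fun x _ => ?_
    simp only [← Finset.sum_mul, sβ, one_mul]
  have hfeas1 : ∀ x y, ∑ i : A × B, (α i.1 x * β i.2 y) = 1 := by
    intro x y
    rw [Fintype.sum_prod_type]
    simp only [← Finset.mul_sum, ← Finset.sum_mul, sα, sβ, one_mul]
  by_cases hα : ∀ c : A → ℝ, (∀ x, ∑ a, c a * α a x = 0) → ∀ a, c a = 0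
  · obtain ⟨w, a1, a2, a3, a4, a5, a6, a7⟩ := lp_stage α β hα1 hβ1
      (fun _ => 0) (fun i => ∑ x, α i.1 x * g2 i.2 x) (fun i => ∑ x, α i.1 x * f2 i.2 x)
      (fun _ => 1) (fun _ => zero_le_one) (by simpa using hfeas1)
    refine ⟨w, a1, a3, a4, ?_, ?_, ?_, ?_⟩
    · exact (rep_LI α β sα hα w a3 f1).le
    · exact (rep_LI α β sα hα w a3 g1).le
    · simpa only [one_mul, hone] using a7
    · simpa only [one_mul, hone] using a6.le
  push Not at hα
  obtain ⟨θ, hθ, a1, ha1⟩ := hα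
  have hLIs : ∀ as : A, θ as ≠ 0 → ∀ c : A → ℝ, c as = 0 →
      (∀ x, ∑ a, c a * α a x = 0) → ∀ a, c a = 0 := by
    intro as has c hc0 hc
    have hG : ∑ a, θ a * ∑ y, g1 a y ≠ 0 := by
      intro h
      exact has (hLI θ hθ h as)
    have h := hLI (fun a => (∑ a, θ a * ∑ y, g1 a y) * c a - (∑ a, c a * ∑ y, g1 a y) * θ a)
      (fun x => by
        simp only [sub_mul, Finset.sum_sub_distrib, mul_assoc, ← Finset.mul_sum, hc, hθ]
        ring)
      (by
        simp only [sub_mul, Finset.sum_sub_distrib, mul_assoc, ← Finset.mul_sum]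
        ring)
    have h1 := h as
    simp only [hc0, mul_zero, zero_sub, neg_eq_zero, mul_eq_zero, has, or_false] at h1
    intro a
    have h2 := h a
    simp only [h1, zero_mul, sub_zero, mul_eq_zero, hG, false_or] at h2
    exact h2
  have hsum : ∑ a, θ a * ∑ x, α a x = 0 := by
    simp only [Finset.mul_sum]
    rw [Finset.sum_comm]
    simp [hθ]
  have hpos : ∃ a, 0 < θ a := by
    by_contra hcon
    push Not at hcon
    have := (Finset.sum_eq_zero_iff_of_nonpos
      (fun i _ => mul_nonpos_of_nonpos_of_nonneg (hcon i) (hα1 i).le)).mp hsum a1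
      (Finset.mem_univ _)
    rcases mul_eq_zero.mp this with h | h
    · exact ha1 h
    · exact absurd h (hα1 a1).ne'
  have hneg : ∃ a, θ a < 0 := by
    by_contra hcon
    push Not at hcon
    have := (Finset.sum_eq_zero_iff_of_nonneg
      (fun i _ => mul_nonneg (hcon i) (hα1 i).le)).mp hsum a1
      (Finset.mem_univ _)
    rcases mul_eq_zero.mp this with h | h
    · exact ha1 h
    · exact absurd h (hα1 a1).ne'
  have : Nonempty A := ⟨a1⟩
  obtain ⟨as, has⟩ := Finite.exists_max θ
  obtain ⟨an, han⟩ := Finite.exists_min θ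
  have hps : 0 < θ as := by obtain ⟨a, ha⟩ := hpos; exact ha.trans_le (has a)
  have hng : θ an < 0 := by obtain ⟨a, ha⟩ := hneg; exact (han a).trans_lt ha
  obtain ⟨s, j, hs, hs0, hsj⟩ := multiplier (fun b => ∑ y, β b y * ∑ a, θ a * f1 a y)
    (fun b => ∑ y, β b y * ∑ a, θ a * g1 a y) (-(1 / θ as)) (-(1 / θ an))
    (by simpa using hps) (by simpa using hng)
  have hw0 : ∀ i : A × B, 0 ≤ 1 + θ i.1 * s i.2 := by
    rintro ⟨a, b⟩
    simp only
    rcases le_total 0 (θ a) with h | h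
    · have h1 := mul_le_mul_of_nonneg_left (hs b).1 h
      have h2 : θ a * (1 / θ as) ≤ 1 := by
        rw [mul_one_div, div_le_one hps]; exact has a
      linarith
    · have h1 := mul_le_mul_of_nonpos_left (hs b).2 h
      have h2 : θ a * (1 / θ an) ≤ 1 := by
        rw [mul_one_div, div_le_one_of_neg hng]; exact han a
      linarith
  have hpert : ∀ k : B → X → ℝ, ∑ i : A × B, (1 + θ i.1 * s i.2) * ∑ x, α i.1 x * k i.2 x =
      ∑ b, ∑ x, k b x := by
    intro k
    rw [← hone k]
    simp only [add_mul, one_mul, Finset.sum_add_distrib]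
    rw [add_eq_left, Fintype.sum_prod_type, Finset.sum_comm]
    apply Finset.sum_eq_zero
    intro b _
    simp only [Finset.mul_sum]
    rw [Finset.sum_comm]
    apply Finset.sum_eq_zero
    intro x _
    have : ∑ a, θ a * s b * (α a x * k b x) = (s b * k b x) * ∑ a, θ a * α a x := by
      rw [Finset.mul_sum]; exact Finset.sum_congr rfl fun a _ => by ring
    rw [this, hθ, mul_zero]
  have hfeas0 : ∀ x y, ∑ i : A × B, (1 + θ i.1 * s i.2) * (α i.1 x * β i.2 y) = 1 := by
    intro x y
    have := hpert (fun b x' => if x' = x then β b y else 0)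
    simpa [sβ] using this
  have hD1 : ∑ i : A × B, (1 + θ i.1 * s i.2) * ∑ y, β i.2 y * g1 i.1 y =
      ∑ a, ∑ y, g1 a y := by
    rw [← hone1 g1]
    simp only [add_mul, one_mul, Finset.sum_add_distrib]
    rw [add_eq_left, ← hs0, Fintype.sum_prod_type, Finset.sum_comm]
    refine Finset.sum_congr rfl fun b _ => ?_
    simp only [Finset.mul_sum, Finset.sum_mul]
    rw [Finset.sum_comm]
    exact Finset.sum_congr rfl fun y _ => Finset.sum_congr rfl fun a _ => by ring
  obtain ⟨w, c1, c2, c3, c4, c5, c6, c7⟩ := lp_stage α β hα1 hβ1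
      (fun i => ∑ y, β i.2 y * g1 i.1 y) (fun i => ∑ x, α i.1 x * g2 i.2 x)
      (fun i => ∑ x, α i.1 x * f2 i.2 x) _ hw0 hfeas0
  rw [hD1] at c5
  rw [hpert] at c6 c7
  refine ⟨w, c1, c3, c4, ?_, c5.le, c7, c6.le⟩
  have key : ∀ a, θ a ≠ 0 →
      θ a * (∑ i, w i * ∑ y, β i.2 y * f1 i.1 y - ∑ a, ∑ y, f1 a y) =
      ∑ b, (w (a, b) - 1) * (∑ y, β b y * ∑ a, θ a * f1 a y -
        j * ∑ y, β b y * ∑ a, θ a * g1 a y) := by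
    intro a ha
    have e1 := rep_dep α β sα sβ θ hθ a (hLIs a ha) w c3 f1
    have e2 := rep_dep α β sα sβ θ hθ a (hLIs a ha) w c3 g1
    rw [c5, sub_self, mul_zero] at e2
    simp only [mul_sub, Finset.sum_sub_distrib]
    simp only [mul_sub, Finset.sum_sub_distrib] at e1
    rw [e1]
    have e3 : ∑ b, (w (a, b) - 1) * (j * ∑ y, β b y * ∑ a, θ a * g1 a y) = 0 := by
      have : ∑ b, (w (a, b) - 1) * (j * ∑ y, β b y * ∑ a, θ a * g1 a y) =
        j * ∑ b, (w (a, b) - 1) * (∑ y, β b y * ∑ a, θ a * g1 a y) := by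
        rw [Finset.mul_sum]; exact Finset.sum_congr rfl fun b _ => by ring
      rw [this, ← e2, mul_zero]
    rw [e3, sub_zero]
  set ζ : B → ℝ := fun b => ∑ y, β b y * ∑ a, θ a * f1 a y -
        j * ∑ y, β b y * ∑ a, θ a * g1 a y with hζ
  have hps0 : ∀ b, 0 < ζ b → w (as, b) = 0 := by
    intro b hb
    apply c2
    simp only
    rw [(hsj b).1 hb]
    field_simp; ring
  have hng0 : ∀ b, ζ b < 0 → w (an, b) = 0 := by
    intro b hb
    apply c2
    simp only
    rw [(hsj b).2 hb]
    have := hng.ne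
    field_simp; ring
  rcases le_total 0 (∑ b, ζ b) with hz | hz
  · have k1 := key as hps.ne'
    have : ∑ b, (w (as, b) - 1) * ζ b ≤ 0 := by
      have : ∑ b, (w (as, b) - 1) * ζ b ≤ ∑ b, - ζ b := by
        refine Finset.sum_le_sum fun b _ => ?_
        rcases lt_or_ge 0 (ζ b) with h | h
        · rw [hps0 b h]; linarith
        · have := mul_nonneg (c1 (as, b)) (neg_nonneg.mpr h)
          linarith
      rw [Finset.sum_neg_distrib] at this
      linarith
    simp only [hζ] at this
    rw [← k1] at this
    have h2 := nonpos_of_mul_nonpos_right this hps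
    linarith
  · have k1 := key an hng.ne
    have : 0 ≤ ∑ b, (w (an, b) - 1) * ζ b := by
      have : ∑ b, - ζ b ≤ ∑ b, (w (an, b) - 1) * ζ b := by
        refine Finset.sum_le_sum fun b _ => ?_
        rcases lt_or_ge (ζ b) 0 with h | h
        · rw [hng0 b h]; linarith
        · have := mul_nonneg (c1 (an, b)) h
          linarith
      rw [Finset.sum_neg_distrib] at this
      linarith
    simp only [hζ] at this
    rw [← k1] at this
    have h2 := nonpos_of_mul_nonneg_right this hng
    linarith

end partA3


section partA4

theorem reindex {I : Type} [Fintype I] [Nonempty I] (w : I → ℝ) (hw : ∀ i, 0 ≤ w i) (k : ℕ)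
    (hc : Fintype.card {i // w i ≠ 0} ≤ k) :
    ∃ (ω : Fin k → ℝ) (κ : Fin k → I), (∀ c, 0 ≤ ω c) ∧
      ∀ F : I → ℝ, ∑ c, ω c * F (κ c) = ∑ i, w i * F i := by
  obtain ⟨em⟩ := Function.Embedding.nonempty_of_card_le
    (α := {i // w i ≠ 0}) (β := Fin k) (by simpa using hc)
  refine ⟨Function.extend em (fun i => w i) 0,
    Function.extend em (fun i => i.1) (fun _ => Classical.arbitrary I), ?_, ?_⟩
  · intro c
    by_cases h : ∃ i, em i = c
    · obtain ⟨i, rfl⟩ := h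
      rw [em.injective.extend_apply]; exact hw _
    · rw [Function.extend_apply' _ _ _ h]; simp
  · intro F
    rw [sum_supp w (fun i => w i * F i) (fun i hi => by simp [hi])]
    symm
    refine Fintype.sum_of_injective em em.injective _ _ ?_ ?_
    · intro c hc
      rw [Function.extend_apply' _ _ _ (by simpa using hc)]; simp
    · intro i
      rw [em.injective.extend_apply, em.injective.extend_apply]

theorem reduce_two {A B X Y : Type} [Fintype A] [Fintype B] [Fintype X] [Fintype Y]
    [Nonempty X] [Nonempty Y]
    (α : A → X → ℝ) (β : B → Y → ℝ) (f1 g1 : A → Y → ℝ) (f2 g2 : B → X → ℝ)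
    (hα1 : ∀ a, 0 < ∑ x, α a x) (hβ1 : ∀ b, 0 < ∑ y, β b y)
    (sα : ∀ x, ∑ a, α a x = 1) (sβ : ∀ y, ∑ b, β b y = 1) :
    ∃ (ω : Fin (Fintype.card X * Fintype.card Y + 2) → ℝ)
      (ka : Fin (Fintype.card X * Fintype.card Y + 2) → A)
      (kb : Fin (Fintype.card X * Fintype.card Y + 2) → B), (∀ i, 0 ≤ ω i) ∧
      (∀ x y, ∑ i, ω i * (α (ka i) x * β (kb i) y) = 1) ∧
      ∑ i, ω i * ∑ y, β (kb i) y * f1 (ka i) y ≤ ∑ a, ∑ y, f1 a y ∧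
      ∑ i, ω i * ∑ y, β (kb i) y * g1 (ka i) y ≤ ∑ a, ∑ y, g1 a y ∧
      ∑ i, ω i * ∑ x, α (ka i) x * f2 (kb i) x ≤ ∑ b, ∑ x, f2 b x ∧
      ∑ i, ω i * ∑ x, α (ka i) x * g2 (kb i) x ≤ ∑ b, ∑ x, g2 b x := by
  let N : A → Option X → ℝ := fun a j => match j with
    | none => ∑ y, g1 a y
    | some x => α a x
  let e : Option X → ℝ := fun j => match j with
    | none => 0
    | some _ => 1
  obtain ⟨u, u1, -, u3, u4, u5⟩ := lp_basic N e (by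
    intro a
    rw [Fintype.sum_option]
    simpa [e, N] using hα1 a) (fun a => ∑ y, f1 a y) _ (fun _ => 1)
      (fun _ => zero_le_one) le_rfl
  have uα : ∀ x, ∑ a, u a * α a x = 1 := by
    intro x
    have := u3 (some x)
    simpa [N, sα] using this
  have uG : ∑ a, u a * ∑ y, g1 a y = ∑ a, ∑ y, g1 a y := by
    have := u3 none
    simpa [N] using this
  have uα' : ∀ x, ∑ a : {a // u a ≠ 0}, u a * α a x = 1 := by
    intro x
    rw [← sum_supp u (fun a => u a * α a x) (fun i hi => by simp [hi]), uα]
  obtain ⟨w, c1, c2, c3, c4, c5, c6, c7⟩ := reduce_core (A := {a // u a ≠ 0})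
    (fun a x => u a * α a x) β (fun a y => u a * f1 a y) (fun a y => u a * g1 a y) f2 g2
    (fun a => by
      rw [← Finset.mul_sum]
      exact mul_pos (lt_of_le_of_ne (u1 a) (Ne.symm a.2)) (hα1 a))
    hβ1 uα' sβ (by
      intro c h1 h2 a
      have := u5 (fun a => if h : u a ≠ 0 then c ⟨a, h⟩ * u a else 0) (fun i hi => by simp [hi])
        (by
          intro j
          rw [sum_supp u _ (fun i hi => by simp [hi])]
          cases j with
          | none =>
            simp only [N]
            refine Eq.trans ?_ h2
            refine Finset.sum_congr rfl fun i _ => ?_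
            rw [dif_pos i.2, ← Finset.mul_sum, mul_assoc]
          | some x =>
            simp only [N]
            refine Eq.trans ?_ (h1 x)
            refine Finset.sum_congr rfl fun i _ => ?_
            rw [dif_pos i.2, mul_assoc]) a
      rw [dif_pos a.2] at this
      exact (mul_eq_zero.mp this).resolve_right a.2)
  have : Nonempty ({a // u a ≠ 0} × B) := by
    by_contra hcon
    rw [not_nonempty_iff] at hcon
    have := c2 (Classical.arbitrary X) (Classical.arbitrary Y)
    simp at this
  obtain ⟨ω, κ, h1, h2⟩ := reindex w c1 _ c3
  refine ⟨fun i => ω i * u (κ i).1, fun i => (κ i).1, fun i => (κ i).2,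
    fun i => mul_nonneg (h1 i) (u1 _), ?_, ?_, ?_, ?_, ?_⟩
  · intro x y
    rw [← c2 x y, ← h2]
    exact Finset.sum_congr rfl fun i _ => by ring
  · have e1 : ∑ a : {a // u a ≠ 0}, ∑ y, u a * f1 a y ≤ ∑ a, ∑ y, f1 a y := by
      simp only [← Finset.mul_sum]
      rw [← sum_supp u (fun a => u a * ∑ y, f1 a y) (fun i hi => by simp [hi])]
      simpa using u4
    refine le_trans (le_of_eq ?_) (c4.trans e1)
    rw [← h2]
    refine Finset.sum_congr rfl fun i _ => ?_
    rw [mul_assoc, Finset.mul_sum (a := u _)]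
    congr 1
    exact Finset.sum_congr rfl fun y _ => by ring
  · have e1 : ∑ a : {a // u a ≠ 0}, ∑ y, u a * g1 a y ≤ ∑ a, ∑ y, g1 a y := by
      simp only [← Finset.mul_sum]
      rw [← sum_supp u (fun a => u a * ∑ y, g1 a y) (fun i hi => by simp [hi])]
      exact uG.le
    refine le_trans (le_of_eq ?_) (c5.trans e1)
    rw [← h2]
    refine Finset.sum_congr rfl fun i _ => ?_
    rw [mul_assoc, Finset.mul_sum (a := u _)]
    congr 1
    exact Finset.sum_congr rfl fun y _ => by ring
  · refine le_trans (le_of_eq ?_) c6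
    rw [← h2]
    refine Finset.sum_congr rfl fun i _ => ?_
    rw [mul_assoc, Finset.mul_sum (a := u _)]
    congr 1
    exact Finset.sum_congr rfl fun y _ => by ring
  · refine le_trans (le_of_eq ?_) c7
    rw [← h2]
    refine Finset.sum_congr rfl fun i _ => ?_
    rw [mul_assoc, Finset.mul_sum (a := u _)]
    congr 1
    exact Finset.sum_congr rfl fun y _ => by ring

theorem reduce {A B X Y : Type} [Fintype A] [Fintype B] [Fintype X] [Fintype Y]
    [Nonempty X] [Nonempty Y]
    (α : A → X → ℝ) (β : B → Y → ℝ) (f1 g1 : A → Y → ℝ) (f2 g2 : B → X → ℝ)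
    (hα : ∀ a x, 0 ≤ α a x) (hβ : ∀ b y, 0 ≤ β b y)
    (hf1 : ∀ a, (∀ x, α a x = 0) → ∀ y, f1 a y = 0)
    (hg1 : ∀ a, (∀ x, α a x = 0) → ∀ y, g1 a y = 0)
    (hf2 : ∀ b, (∀ y, β b y = 0) → ∀ x, f2 b x = 0)
    (hg2 : ∀ b, (∀ y, β b y = 0) → ∀ x, g2 b x = 0)
    (sα : ∀ x, ∑ a, α a x = 1) (sβ : ∀ y, ∑ b, β b y = 1) :
    ∃ (ω : Fin (Fintype.card X * Fintype.card Y + 2) → ℝ)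
      (ka : Fin (Fintype.card X * Fintype.card Y + 2) → A)
      (kb : Fin (Fintype.card X * Fintype.card Y + 2) → B), (∀ i, 0 ≤ ω i) ∧
      (∀ x y, ∑ i, ω i * (α (ka i) x * β (kb i) y) = 1) ∧
      ∑ i, ω i * ∑ y, β (kb i) y * f1 (ka i) y ≤ ∑ a, ∑ y, f1 a y ∧
      ∑ i, ω i * ∑ y, β (kb i) y * g1 (ka i) y ≤ ∑ a, ∑ y, g1 a y ∧
      ∑ i, ω i * ∑ x, α (ka i) x * f2 (kb i) x ≤ ∑ b, ∑ x, f2 b x ∧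
      ∑ i, ω i * ∑ x, α (ka i) x * g2 (kb i) x ≤ ∑ b, ∑ x, g2 b x := by
  have za : ∀ a, ∑ x, α a x = 0 → ∀ x, α a x = 0 := fun a h x =>
    (Finset.sum_eq_zero_iff_of_nonneg (fun x _ => hα a x)).mp h x (Finset.mem_univ _)
  have zb : ∀ b, ∑ y, β b y = 0 → ∀ y, β b y = 0 := fun b h y =>
    (Finset.sum_eq_zero_iff_of_nonneg (fun y _ => hβ b y)).mp h y (Finset.mem_univ _)
  obtain ⟨ω, ka, kb, h0, h1, h2, h3, h4, h5⟩ := reduce_two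
    (A := {a // ∑ x, α a x ≠ 0}) (B := {b // ∑ y, β b y ≠ 0})
    (fun a => α a) (fun b => β b) (fun a => f1 a) (fun a => g1 a) (fun b => f2 b)
    (fun b => g2 b)
    (fun a => lt_of_le_of_ne (Finset.sum_nonneg fun x _ => hα a x) (Ne.symm a.2))
    (fun b => lt_of_le_of_ne (Finset.sum_nonneg fun x _ => hβ b x) (Ne.symm b.2))
    (fun x => by
      rw [← sum_supp (fun a => ∑ x, α a x) (fun a => α a x) (fun a ha => za a ha x), sα])
    (fun y => by
      rw [← sum_supp (fun b => ∑ y, β b y) (fun b => β b y) (fun b hb => zb b hb y), sβ])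
  refine ⟨ω, fun i => ka i, fun i => kb i, h0, h1, ?_, ?_, ?_, ?_⟩
  · rwa [← sum_supp (fun a => ∑ x, α a x) (fun a => ∑ y, f1 a y)
      (fun a ha => Finset.sum_eq_zero fun y _ => hf1 a (za a ha) y)] at h2
  · rwa [← sum_supp (fun a => ∑ x, α a x) (fun a => ∑ y, g1 a y)
      (fun a ha => Finset.sum_eq_zero fun y _ => hg1 a (za a ha) y)] at h3
  · rwa [← sum_supp (fun a => ∑ x, β a x) (fun a => ∑ y, f2 a y)
      (fun a ha => Finset.sum_eq_zero fun y _ => hf2 a (zb a ha) y)] at h4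
  · rwa [← sum_supp (fun a => ∑ x, β a x) (fun a => ∑ y, g2 a y)
      (fun a ha => Finset.sum_eq_zero fun y _ => hg2 a (zb a ha) y)] at h5

end partA4


section partB
open TWR

theorem gibbs {I : Type} [Fintype I] (P Q : I → ℝ) (hP : ∀ i, 0 ≤ P i) (hQ : ∀ i, 0 ≤ Q i)
    (hPQ : ∀ i, P i ≠ 0 → Q i ≠ 0) (hs : ∑ i, Q i ≤ ∑ i, P i) :
    0 ≤ ∑ i, P i * (Real.logb 2 (P i) - Real.logb 2 (Q i)) := by
  have hl : 0 < Real.log 2 := Real.log_pos (by norm_num)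
  have h1 : ∀ i, (P i - Q i) / Real.log 2 ≤
      P i * (Real.logb 2 (P i) - Real.logb 2 (Q i)) := by
    intro i
    by_cases h : P i = 0
    · rw [h, zero_mul, zero_sub]
      exact div_nonpos_of_nonpos_of_nonneg (neg_nonpos.mpr (hQ i)) hl.le
    · have hp : 0 < P i := lt_of_le_of_ne (hP i) (Ne.symm h)
      have hq : 0 < Q i := lt_of_le_of_ne (hQ i) (Ne.symm (hPQ i h))
      have h2 := Real.log_le_sub_one_of_pos (div_pos hq hp)
      rw [Real.log_div hq.ne' hp.ne'] at h2
      rw [Real.logb, Real.logb, ← sub_div, ← mul_div_assoc]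
      apply div_le_div_of_nonneg_right _ hl.le
      have h3 := mul_le_mul_of_nonneg_left h2 hp.le
      rw [mul_sub (P i) (Q i / P i) 1, mul_div_cancel₀ _ hp.ne'] at h3
      linarith
  refine le_trans ?_ (Finset.sum_le_sum fun i _ => h1 i)
  rw [← Finset.sum_div, Finset.sum_sub_distrib]
  exact div_nonneg (by linarith) hl.le

def Phi {X : Type} [Fintype X] (v : X → ℝ) : ℝ :=
  ∑ x, v x * Real.logb 2 (v x) - (∑ x, v x) * Real.logb 2 (∑ x, v x)

theorem mul_logb_mul (c v : ℝ) :
    c * v * Real.logb 2 (c * v) = c * v * Real.logb 2 c + c * (v * Real.logb 2 v) := by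
  by_cases hc : c = 0
  · simp [hc]
  by_cases hv : v = 0
  · simp [hv]
  rw [Real.logb_mul hc hv]; ring

theorem Phi_smul {X : Type} [Fintype X] (c : ℝ) (v : X → ℝ) :
    Phi (fun x => c * v x) = c * Phi v := by
  unfold Phi
  rw [← Finset.mul_sum, mul_logb_mul]
  simp only [mul_logb_mul, Finset.sum_add_distrib, ← Finset.mul_sum, ← Finset.sum_mul]
  ring

theorem Phi_zero {X : Type} [Fintype X] (v : X → ℝ) (hv : ∀ x, v x = 0) : Phi v = 0 := by
  unfold Phi
  simp [hv]

theorem condMI_eq {X Y C : Type} [Fintype X] [Fintype Y] [Fintype C] (q : X × Y → ℝ)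
    (p : X × Y × C → ℝ) (hp : ∀ x y, ∑ c, p (x, y, c) = q (x, y)) :
    condMI p = (H2 q - H2 (fun y => ∑ x, q (x, y))) + ∑ c, ∑ y, Phi (fun x => p (x, y, c)) := by
  unfold condMI
  have e1 : (fun ab : X × Y => ∑ c, p (ab.1, ab.2, c)) = q := by
    funext ab; exact hp _ _
  have e2 : (fun y => ∑ x, ∑ c, p (x, y, c)) = (fun y => ∑ x, q (x, y)) := by
    funext y; simp only [hp]
  rw [e1, e2]
  have e3 : ∑ c, ∑ y, Phi (fun x => p (x, y, c)) =
      H2 (fun bc : Y × C => ∑ a, p (a, bc.1, bc.2)) - H2 p := by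
    unfold H2 Phi
    simp only [Finset.sum_sub_distrib, Fintype.sum_prod_type]
    have s1 : ∑ c, ∑ y, ∑ x, p (x, y, c) * Real.logb 2 (p (x, y, c)) =
        ∑ x, ∑ y, ∑ c, p (x, y, c) * Real.logb 2 (p (x, y, c)) := by
      rw [Finset.sum_comm]
      simp only [fun y => Finset.sum_comm (s := (Finset.univ : Finset C)) (t := (Finset.univ : Finset X))
        (f := fun c x => p (x, y, c) * Real.logb 2 (p (x, y, c)))]
      rw [Finset.sum_comm]
    rw [s1, Finset.sum_comm (s := (Finset.univ : Finset C))]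
    ring
  rw [e3]; ring

theorem condMI_expand {X Y C : Type} [Fintype X] [Fintype Y] [Fintype C]
    (p : X × Y × C → ℝ) :
    condMI p = ∑ x, ∑ y, ∑ c, p (x, y, c) *
      (Real.logb 2 (p (x, y, c)) + Real.logb 2 (∑ x', ∑ c', p (x', y, c')) -
        Real.logb 2 (∑ c', p (x, y, c')) - Real.logb 2 (∑ x', p (x', y, c))) := by
  unfold condMI H2
  simp only [Fintype.sum_prod_type, mul_sub, mul_add, Finset.sum_sub_distrib,
    Finset.sum_add_distrib, Finset.sum_mul]
  have s1 : ∑ y, ∑ c, ∑ x, p (x, y, c) * Real.logb 2 (∑ a, p (a, y, c)) =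
      ∑ x, ∑ y, ∑ c, p (x, y, c) * Real.logb 2 (∑ a, p (a, y, c)) := by
    rw [Finset.sum_comm (s := (Finset.univ : Finset X))]
    refine Finset.sum_congr rfl fun y _ => ?_
    rw [Finset.sum_comm]
  have s2 : ∑ y, ∑ x, ∑ c, p (x, y, c) * Real.logb 2 (∑ a, ∑ c, p (a, y, c)) =
      ∑ x, ∑ y, ∑ c, p (x, y, c) * Real.logb 2 (∑ a, ∑ c, p (a, y, c)) := by
    rw [Finset.sum_comm]
  rw [s1, s2]
  ring

theorem condMI_nonneg {X Y C : Type} [Fintype X] [Fintype Y] [Fintype C]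
    (p : X × Y × C → ℝ) (hp : ∀ t, 0 ≤ p t) : 0 ≤ condMI p := by
  rw [condMI_expand]
  have n1 : ∀ x y, 0 ≤ ∑ c', p (x, y, c') := fun x y => Finset.sum_nonneg fun _ _ => hp _
  have n2 : ∀ y c, 0 ≤ ∑ x', p (x', y, c) := fun x y => Finset.sum_nonneg fun _ _ => hp _
  have n3 : ∀ y, 0 ≤ ∑ x', ∑ c', p (x', y, c') := fun y => Finset.sum_nonneg fun _ _ => n1 _ _
  have pos : ∀ x y c, p (x, y, c) ≠ 0 → (∑ c', p (x, y, c') ≠ 0) ∧ (∑ x', p (x', y, c) ≠ 0) ∧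
      (∑ x', ∑ c', p (x', y, c') ≠ 0) := by
    intro x y c h
    have hpp : 0 < p (x, y, c) := lt_of_le_of_ne (hp _) (Ne.symm h)
    have a1 : p (x, y, c) ≤ ∑ c', p (x, y, c') :=
      Finset.single_le_sum (f := fun c' => p (x, y, c')) (fun _ _ => hp _) (Finset.mem_univ c)
    have a2 : p (x, y, c) ≤ ∑ x', p (x', y, c) :=
      Finset.single_le_sum (f := fun x' => p (x', y, c)) (fun _ _ => hp _) (Finset.mem_univ x)
    have a3 : ∑ c', p (x, y, c') ≤ ∑ x', ∑ c', p (x', y, c') :=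
      Finset.single_le_sum (f := fun x' => ∑ c', p (x', y, c')) (fun _ _ => n1 _ _)
        (Finset.mem_univ x)
    exact ⟨by linarith, by linarith, by linarith⟩
  have g := gibbs p (fun t => (∑ c', p (t.1, t.2.1, c')) * (∑ x', p (x', t.2.1, t.2.2)) /
      (∑ x', ∑ c', p (x', t.2.1, c'))) hp
    (fun t => div_nonneg (mul_nonneg (n1 _ _) (n2 _ _)) (n3 _))
    (fun t ht => by
      obtain ⟨h1, h2, h3⟩ := pos t.1 t.2.1 t.2.2 ht
      exact div_ne_zero (mul_ne_zero h1 h2) h3)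
    (by
      simp only [Fintype.sum_prod_type]
      rw [Finset.sum_comm, Finset.sum_comm (s := (Finset.univ : Finset X))]
      refine Finset.sum_le_sum fun y _ => ?_
      simp only [← Finset.sum_div, ← Finset.mul_sum, ← Finset.sum_mul]
      rw [Finset.sum_comm (s := (Finset.univ : Finset C))]
      rw [mul_self_div_self])
  refine g.trans (le_of_eq ?_)
  simp only [Fintype.sum_prod_type]
  refine Finset.sum_congr rfl fun x _ => Finset.sum_congr rfl fun y _ =>
    Finset.sum_congr rfl fun c _ => ?_
  by_cases h : p (x, y, c) = 0
  · simp [h]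
  obtain ⟨h1, h2, h3⟩ := pos x y c h
  rw [Real.logb_div (mul_ne_zero h1 h2) h3, Real.logb_mul h1 h2]
  ring

theorem wz_factor {A X Y : Type} [Fintype A] [Fintype X] [Fintype Y] [Nonempty A]
    (q : X × Y → ℝ) (p : A × X × Y → ℝ) (hp : ∀ t, 0 ≤ p t)
    (hm : ∀ x y, (∑ a, p (a, x, y)) = q (x, y)) (hM : Markov p) :
    ∃ α : A → X → ℝ, (∀ a x, 0 ≤ α a x) ∧ (∀ x, ∑ a, α a x = 1) ∧
      ∀ a x y, p (a, x, y) = q (x, y) * α a x := by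
  have hq : ∀ x y, 0 ≤ q (x, y) := fun x y => by
    rw [← hm]; exact Finset.sum_nonneg fun _ _ => hp _
  have hsw : ∀ x, ∑ a, ∑ y, p (a, x, y) = ∑ y, q (x, y) := by
    intro x; rw [Finset.sum_comm]; simp only [hm]
  refine ⟨fun a x => if ∑ y, q (x, y) = 0 then (if a = Classical.arbitrary A then 1 else 0)
    else (∑ y, p (a, x, y)) / ∑ y, q (x, y), ?_, ?_, ?_⟩
  · intro a x
    dsimp only
    split_ifs
    · exact zero_le_one
    · exact le_rfl
    · exact div_nonneg (Finset.sum_nonneg fun _ _ => hp _) (Finset.sum_nonneg fun _ _ => hq _ _)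
  · intro x
    by_cases h : ∑ y, q (x, y) = 0
    · simp [h]
    · simp only [h, if_false]
      rw [← Finset.sum_div, hsw, div_self h]
  · intro a x y
    by_cases h : ∑ y, q (x, y) = 0
    · have h1 : q (x, y) = 0 :=
        (Finset.sum_eq_zero_iff_of_nonneg (fun y _ => hq x y)).mp h y (Finset.mem_univ _)
      rw [h1, zero_mul]
      have h2 := hm x y
      rw [h1] at h2
      exact (Finset.sum_eq_zero_iff_of_nonneg (fun a _ => hp (a, x, y))).mp h2 a
        (Finset.mem_univ _)
    · simp only [h, if_false]
      have := hM a x y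
      rw [hsw, hm] at this
      field_simp
      linarith

theorem wz_nonempty {X Y Xh : Type} [Fintype X] [Fintype Y] [Fintype Xh]
    (q : X × Y → ℝ) (hq : IsPmf q) (δ1 : X → Xh → ℝ) (hδ1n : ∀ x, ∃ xh, δ1 x xh = 0)
    (d1 : ℝ) (hd1 : 0 ≤ d1) :
    {r : ℝ | ∃ p : Fin (Fintype.card X + 1) × X × Y → ℝ, IsPmf p ∧
    (∀ x y, (∑ a, p (a, x, y)) = q (x, y)) ∧ Markov p ∧
    (∃ π1 : Fin (Fintype.card X + 1) × Y → Xh,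
      (∑ a, ∑ x, ∑ y, p (a, x, y) * δ1 x (π1 (a, y))) ≤ d1) ∧
    r = condMI (fun t : X × Y × Fin (Fintype.card X + 1) => p (t.2.2, t.1, t.2.1))}.Nonempty := by
  have hX : Nonempty X := by
    by_contra h
    rw [not_nonempty_iff] at h
    have := hq.2
    simp at this
  choose z hz using hδ1n
  have hXh : Nonempty Xh := ⟨z (Classical.arbitrary X)⟩
  let em : X → Fin (Fintype.card X + 1) := fun x => Fin.castSucc (Fintype.equivFin X x)
  have hem : Function.Injective em := fun a b h => by
    simpa [em] using h
  let p : Fin (Fintype.card X + 1) × X × Y → ℝ := fun t =>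
    if t.1 = em t.2.1 then q t.2 else 0
  have hpm : ∀ x y, (∑ a, p (a, x, y)) = q (x, y) := fun x y => by simp [p]
  refine ⟨_, p, ⟨?_, ?_⟩, hpm, ?_, ⟨fun t => Function.extend em z (fun _ => Classical.arbitrary Xh) t.1, ?_⟩, rfl⟩
  · intro t
    simp only [p]
    split_ifs
    · exact hq.1 _
    · exact le_rfl
  · rw [Fintype.sum_prod_type, Finset.sum_comm, ← hq.2]
    exact Finset.sum_congr rfl fun t _ => hpm t.1 t.2
  · intro a x y
    rw [hpm, Finset.sum_comm]
    simp only [hpm]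
    by_cases h : a = em x
    · simp [p, h, mul_comm]
    · simp [p, h]
  · refine le_trans (le_of_eq ?_) hd1
    refine Finset.sum_eq_zero fun a _ => Finset.sum_eq_zero fun x _ =>
      Finset.sum_eq_zero fun y _ => ?_
    by_cases h : a = em x
    · simp only [h]
      rw [hem.extend_apply, hz, mul_zero]
    · simp [p, h]

end partB


section partB2
open TWR

def odSet {𝒳 𝒴 Xh Yh : Type} [Fintype 𝒳] [Fintype 𝒴] [Fintype Xh] [Fintype Yh]
    (q : 𝒳 × 𝒴 → ℝ) (δ1 : 𝒳 → Xh → ℝ) (δ2 : 𝒴 → Yh → ℝ) (d1 d2 : ℝ) : Set ℝ :=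
  {r : ℝ | ∃ W : 𝒳 × 𝒴 → Fin (Fintype.card 𝒳 * Fintype.card 𝒴 + 2) → ℝ,
    IsCondPmf W ∧
    (∃ π1 : Fin (Fintype.card 𝒳 * Fintype.card 𝒴 + 2) × 𝒴 → Xh,
      (∑ x, ∑ y, ∑ c, q (x, y) * W (x, y) c * δ1 x (π1 (c, y))) ≤ d1) ∧
    (∃ π2 : Fin (Fintype.card 𝒳 * Fintype.card 𝒴 + 2) × 𝒳 → Yh,
      (∑ x, ∑ y, ∑ c, q (x, y) * W (x, y) c * δ2 y (π2 (c, x))) ≤ d2) ∧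
    r = max
      (condMI (fun t : 𝒳 × 𝒴 × Fin (Fintype.card 𝒳 * Fintype.card 𝒴 + 2) =>
        q (t.1, t.2.1) * W (t.1, t.2.1) t.2.2))
      (condMI (fun t : 𝒴 × 𝒳 × Fin (Fintype.card 𝒳 * Fintype.card 𝒴 + 2) =>
        q (t.2.1, t.1) * W (t.2.1, t.1) t.2.2))}

def wzSet {X Y Xh : Type} [Fintype X] [Fintype Y] [Fintype Xh]
    (q : X × Y → ℝ) (δ1 : X → Xh → ℝ) (d1 : ℝ) : Set ℝ :=
    {r : ℝ | ∃ p : Fin (Fintype.card X + 1) × X × Y → ℝ, IsPmf p ∧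
    (∀ x y, (∑ a, p (a, x, y)) = q (x, y)) ∧ Markov p ∧
    (∃ π1 : Fin (Fintype.card X + 1) × Y → Xh,
      (∑ a, ∑ x, ∑ y, p (a, x, y) * δ1 x (π1 (a, y))) ≤ d1) ∧
    r = condMI (fun t : X × Y × Fin (Fintype.card X + 1) => p (t.2.2, t.1, t.2.1))}

theorem od_step {𝒳 𝒴 Xh Yh : Type} [Fintype 𝒳] [Fintype 𝒴] [Fintype Xh] [Fintype Yh]
    (q : 𝒳 × 𝒴 → ℝ) (hq : IsPmf q) (δ1 : 𝒳 → Xh → ℝ) (δ2 : 𝒴 → Yh → ℝ) (d1 d2 : ℝ)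
    (r1 r2 : ℝ) (h1 : r1 ∈ wzSet q δ1 d1) (h2 : r2 ∈ wzSet (swap q) δ2 d2) :
    ∃ r ∈ odSet q δ1 δ2 d1 d2, r ≤ max r1 r2 := by
  have hXY : Nonempty (𝒳 × 𝒴) := by
    by_contra h
    rw [not_nonempty_iff] at h
    have := hq.2
    simp at this
  have hX : Nonempty 𝒳 := ⟨hXY.some.1⟩
  have hY : Nonempty 𝒴 := ⟨hXY.some.2⟩
  obtain ⟨p1, hp1, hm1, hM1, ⟨π1, hπ1⟩, hr1⟩ := h1
  obtain ⟨p2, hp2, hm2, hM2, ⟨π2, hπ2⟩, hr2⟩ := h2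
  obtain ⟨α, hα0, sα, hα⟩ := wz_factor q p1 hp1.1 hm1 hM1
  obtain ⟨β, hβ0, sβ, hβ⟩ := wz_factor (swap q) p2 hp2.1 hm2 hM2
  obtain ⟨ω, ka, kb, w0, w1, w2, w3, w4, w5⟩ := reduce α β
    (fun a y => Phi (fun x => q (x, y) * α a x))
    (fun a y => ∑ x, q (x, y) * α a x * δ1 x (π1 (a, y)))
    (fun b x => Phi (fun y => q (x, y) * β b y))
    (fun b x => ∑ y, q (x, y) * β b y * δ2 y (π2 (b, x)))
    hα0 hβ0 (fun a ha y => Phi_zero _ fun x => by rw [ha, mul_zero])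
    (fun a ha y => Finset.sum_eq_zero fun x _ => by rw [ha]; ring)
    (fun a ha y => Phi_zero _ fun x => by rw [ha, mul_zero])
    (fun a ha y => Finset.sum_eq_zero fun x _ => by rw [ha]; ring) sα sβ
  let W : 𝒳 × 𝒴 → Fin (Fintype.card 𝒳 * Fintype.card 𝒴 + 2) → ℝ := fun t c =>
    ω c * (α (ka c) t.1 * β (kb c) t.2)
  have hW1 : ∀ x y, ∑ c, W (x, y) c = 1 := w1
  refine ⟨_, ⟨W, fun t => ⟨fun c => mul_nonneg (w0 c) (mul_nonneg (hα0 _ _) (hβ0 _ _)), w1 t.1 t.2⟩,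
    ⟨fun t => π1 (ka t.1, t.2), ?_⟩, ⟨fun t => π2 (kb t.1, t.2), ?_⟩, rfl⟩, ?_⟩
  · refine le_trans (le_of_eq ?_) (w3.trans (le_trans (le_of_eq ?_) hπ1))
    · rw [Finset.sum_comm]
      simp only [fun y => Finset.sum_comm (s := (Finset.univ : Finset 𝒳))
        (t := (Finset.univ : Finset (Fin (Fintype.card 𝒳 * Fintype.card 𝒴 + 2))))
        (f := fun x c => q (x, y) * W (x, y) c * δ1 x (π1 (ka c, y)))]
      rw [Finset.sum_comm]
      refine Finset.sum_congr rfl fun c _ => ?_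
      simp only [Finset.mul_sum]
      exact Finset.sum_congr rfl fun y _ => Finset.sum_congr rfl fun x _ => by
        simp only [W]; ring
    · refine Finset.sum_congr rfl fun a _ => ?_
      rw [Finset.sum_comm]
      simp only [hα]
  · refine le_trans (le_of_eq ?_) (w5.trans (le_trans (le_of_eq ?_) hπ2))
    · simp only [fun x => Finset.sum_comm (s := (Finset.univ : Finset 𝒴))
        (t := (Finset.univ : Finset (Fin (Fintype.card 𝒳 * Fintype.card 𝒴 + 2))))
        (f := fun y c => q (x, y) * W (x, y) c * δ2 y (π2 (kb c, x)))]
      rw [Finset.sum_comm]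
      refine Finset.sum_congr rfl fun c _ => ?_
      simp only [Finset.mul_sum]
      exact Finset.sum_congr rfl fun y _ => Finset.sum_congr rfl fun x _ => by
        simp only [W]; ring
    · refine Finset.sum_congr rfl fun a _ => ?_
      rw [Finset.sum_comm]
      simp only [hβ, swap]
  · apply max_le_max
    · rw [hr1, condMI_eq q _ (fun x y => by
        simp only; rw [← Finset.mul_sum, hW1, mul_one]),
        condMI_eq q (fun t : 𝒳 × 𝒴 × Fin (Fintype.card 𝒳 + 1) => p1 (t.2.2, t.1, t.2.1)) hm1]
      apply add_le_add le_rfl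
      refine le_trans (le_of_eq ?_) (w2.trans (le_of_eq ?_))
      · refine Finset.sum_congr rfl fun c _ => ?_
        rw [Finset.mul_sum]
        refine Finset.sum_congr rfl fun y _ => ?_
        rw [← mul_assoc, ← Phi_smul]
        congr 1
        funext x
        simp only [W]; ring
      · simp only [hα]
    · rw [hr2, condMI_eq (swap q) _ (fun x y => by
        simp only; rw [← Finset.mul_sum, hW1, mul_one]; rfl),
        condMI_eq (swap q) (fun t : 𝒴 × 𝒳 × Fin (Fintype.card 𝒴 + 1) => p2 (t.2.2, t.1, t.2.1)) hm2]
      apply add_le_add le_rfl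
      refine le_trans (le_of_eq ?_) (w4.trans (le_of_eq ?_))
      · refine Finset.sum_congr rfl fun c _ => ?_
        rw [Finset.mul_sum]
        refine Finset.sum_congr rfl fun y _ => ?_
        rw [← mul_assoc, ← Phi_smul]
        congr 1
        funext x
        simp only [W]; ring
      · simp only [hβ, swap]

theorem od_nonneg {𝒳 𝒴 Xh Yh : Type} [Fintype 𝒳] [Fintype 𝒴] [Fintype Xh] [Fintype Yh]
    (q : 𝒳 × 𝒴 → ℝ) (hq : IsPmf q) (δ1 : 𝒳 → Xh → ℝ) (δ2 : 𝒴 → Yh → ℝ) (d1 d2 : ℝ)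
    (r : ℝ) (h : r ∈ odSet q δ1 δ2 d1 d2) : 0 ≤ r := by
  obtain ⟨W, hW, -, -, rfl⟩ := h
  exact le_max_of_le_left (condMI_nonneg _ fun t => mul_nonneg (hq.1 _) ((hW _).1 _))

theorem od_nonempty {𝒳 𝒴 Xh Yh : Type} [Fintype 𝒳] [Fintype 𝒴] [Fintype Xh] [Fintype Yh]
    (q : 𝒳 × 𝒴 → ℝ) (hq : IsPmf q) (δ1 : 𝒳 → Xh → ℝ) (δ2 : 𝒴 → Yh → ℝ) (d1 d2 : ℝ)
    (hδ1n : ∀ x, ∃ xh, δ1 x xh = 0) (hδ2n : ∀ y, ∃ yh, δ2 y yh = 0)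
    (hd1 : 0 ≤ d1) (hd2 : 0 ≤ d2) :
    (odSet q δ1 δ2 d1 d2).Nonempty ∧
    oneDescUB q δ1 δ2 d1 d2 ≤ max (wzRD q δ1 d1) (wzRD (swap q) δ2 d2) := by
  have hq' : IsPmf (swap q) := by
    refine ⟨fun t => hq.1 _, ?_⟩
    rw [← hq.2, Fintype.sum_prod_type, Fintype.sum_prod_type, Finset.sum_comm]
    rfl
  have n1 : (wzSet q δ1 d1).Nonempty := wz_nonempty q hq δ1 hδ1n d1 hd1
  have n2 : (wzSet (swap q) δ2 d2).Nonempty := wz_nonempty (swap q) hq' δ2 hδ2n d2 hd2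
  refine ⟨?_, ?_⟩
  · obtain ⟨r, hr, -⟩ := od_step q hq δ1 δ2 d1 d2 _ _ n1.some_mem n2.some_mem
    exact ⟨r, hr⟩
  · apply le_of_forall_pos_le_add
    intro ε hε
    obtain ⟨r1, h1, h1'⟩ := Real.lt_sInf_add_pos n1 hε
    obtain ⟨r2, h2, h2'⟩ := Real.lt_sInf_add_pos n2 hε
    obtain ⟨r, hr, hr'⟩ := od_step q hq δ1 δ2 d1 d2 r1 r2 h1 h2
    have hb : BddBelow (odSet q δ1 δ2 d1 d2) := ⟨0, fun r hr => od_nonneg q hq _ _ _ _ r hr⟩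
    have h3 : sInf (odSet q δ1 δ2 d1 d2) ≤ r := csInf_le hb hr
    refine le_trans h3 (hr'.trans ?_)
    rw [← max_add_add_right]
    exact max_le_max h1'.le h2'.le

end partB2


section partC1

theorem avg_exists {I : Type} [Fintype I] (w F : I → ℝ) (R : ℝ) (hw : ∀ i, 0 ≤ w i)
    (hs : ∑ i, w i = 1) (h : ∑ i, w i * F i ≤ R) : ∃ i, F i ≤ R := by
  by_contra hcon
  push Not at hcon
  have h1 : ∑ i, w i * R ≤ ∑ i, w i * F i :=
    Finset.sum_le_sum fun i _ => mul_le_mul_of_nonneg_left (hcon i).le (hw i)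
  rw [← Finset.sum_mul, hs, one_mul] at h1
  have h2 : ∑ i, w i * (F i - R) = 0 := by
    simp only [mul_sub, Finset.sum_sub_distrib, ← Finset.sum_mul, hs]; linarith
  have h3 := (Finset.sum_eq_zero_iff_of_nonneg
    (fun i _ => mul_nonneg (hw i) (sub_nonneg.mpr (hcon i).le))).mp h2
  have h4 : ∑ i, w i = 0 := Finset.sum_eq_zero fun i hi => by
    have := h3 i hi
    rcases mul_eq_zero.mp this with h | h
    · exact h
    · have := hcon i; linarith
  linarith

theorem sum_prod_fun {N : ℕ} {Z : Type} [Fintype Z] (h : Fin N → Z → ℝ) :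
    ∑ c : Fin N → Z, ∏ j, h j (c j) = ∏ j, ∑ z, h j z := by
  rw [Finset.prod_univ_sum]
  simp

theorem iid_marg {N : ℕ} {Z : Type} [Fintype Z] (p : Z → ℝ) (hp : ∑ z, p z = 1)
    (φ : Z → ℝ) (j : Fin N) :
    ∑ c : Fin N → Z, (∏ i, p (c i)) * φ (c j) = ∑ z, p z * φ z := by
  have h1 : ∀ c : Fin N → Z, (∏ i, p (c i)) * φ (c j) =
      ∏ i, (p (c i) * if i = j then φ (c i) else 1) := by
    intro c
    rw [Finset.prod_mul_distrib]
    simp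
  simp only [h1]
  rw [sum_prod_fun (fun i z => p z * if i = j then φ z else 1)]
  rw [Finset.prod_eq_single j]
  · simp
  · intro b _ hb; simp [hb, hp]
  · simp

theorem bin_count {N M : ℕ} (j j' : Fin N) (hj : j' ≠ j) :
    (M : ℝ) * ∑ b : Fin N → Fin M, (if b j' = b j then (1 : ℝ) else 0) ≤ (M : ℝ) ^ N := by
  rw [Finset.sum_boole]
  have h1 : (Finset.univ.filter (fun b : Fin N → Fin M => b j' = b j)).card ≤ M ^ (N - 1) := by
    rw [← Fintype.card_subtype]
    have : Fintype.card ({i : Fin N // i ≠ j'} → Fin M) = M ^ (N - 1) := by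
      rw [Fintype.card_fun, Fintype.card_fin, Fintype.card_subtype_compl]
      simp
    rw [← this]
    refine Fintype.card_le_of_injective (fun b i => b.1 i.1) ?_
    rintro ⟨b, hb⟩ ⟨b', hb'⟩ h
    ext i
    have h2 : ∀ i, i ≠ j' → b i = b' i := fun i hi => congrFun h ⟨i, hi⟩
    by_cases hi : i = j'
    · subst hi
      simp only
      rw [hb, hb', h2 j (Ne.symm hj)]
    · simp only; rw [h2 i hi]
  have hN : N = (N - 1) + 1 := by
    have := j.2; omega
  have h2 : ((Finset.univ.filter (fun b : Fin N → Fin M => b j' = b j)).card : ℝ) ≤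
      (M : ℝ) ^ (N - 1) := by exact_mod_cast h1
  calc (M : ℝ) * _ ≤ (M : ℝ) * (M : ℝ) ^ (N - 1) :=
        mul_le_mul_of_nonneg_left h2 (Nat.cast_nonneg _)
    _ = (M : ℝ) ^ N := by conv_rhs => rw [hN, pow_succ, mul_comm]

theorem bin_stage {U V Z : Type} [Fintype U] [Fintype V] [Nonempty Z]
    (q : U × V → ℝ) (hq : ∀ t, 0 ≤ q t) (T : U → V → Z → Prop) (S1 : V → Z → Prop)
    (S2 : U → Z → Prop) (hT1 : ∀ u v z, T u v z → S1 v z) (hT2 : ∀ u v z, T u v z → S2 u z)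
    (N M : ℕ) (hM : 0 < M) (c : Fin N → Z) :
    ∃ (f : U × V → Fin M) (g1 : Fin M × V → Z) (g2 : Fin M × U → Z),
      ∑ t : U × V, q t * (if T t.1 t.2 (g1 (f t, t.2)) ∧ g1 (f t, t.2) = g2 (f t, t.1)
        then (0 : ℝ) else 1) ≤
      ∑ t : U × V, q t * ((∏ j, if T t.1 t.2 (c j) then (0 : ℝ) else 1) +
        (M : ℝ)⁻¹ * ∑ j, ((if S1 t.2 (c j) then (1 : ℝ) else 0) +
          (if S2 t.1 (c j) then (1 : ℝ) else 0))) := by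
  have hM0 : (0 : ℝ) < M := by exact_mod_cast hM
  let hit : U × V → Prop := fun t => ∃ j, T t.1 t.2 (c j)
  let f : (Fin N → Fin M) → U × V → Fin M := fun b t =>
    if h : hit t then b h.choose else ⟨0, hM⟩
  let g1 : (Fin N → Fin M) → Fin M × V → Z := fun b s =>
    if h : ∃ j, b j = s.1 ∧ S1 s.2 (c j) then c h.choose else Classical.arbitrary Z
  let g2 : (Fin N → Fin M) → Fin M × U → Z := fun b s =>
    if h : ∃ j, b j = s.1 ∧ S2 s.2 (c j) then c h.choose else Classical.arbitrary Z
  let fail : (Fin N → Fin M) → U × V → ℝ := fun b t =>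
    if T t.1 t.2 (g1 b (f b t, t.2)) ∧ g1 b (f b t, t.2) = g2 b (f b t, t.1)
        then (0 : ℝ) else 1
  have hpt : ∀ t : U × V, ∑ b : Fin N → Fin M, ((M : ℝ) ^ N)⁻¹ * fail b t ≤
      (∏ j, if T t.1 t.2 (c j) then (0 : ℝ) else 1) +
        (M : ℝ)⁻¹ * ∑ j, ((if S1 t.2 (c j) then (1 : ℝ) else 0) +
          (if S2 t.1 (c j) then (1 : ℝ) else 0)) := by
    intro t
    have hfail1 : ∀ b, fail b t ≤ 1 := by
      intro b; simp only [fail]; split_ifs <;> norm_num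
    have hnn : 0 ≤ (M : ℝ)⁻¹ * ∑ j, ((if S1 t.2 (c j) then (1 : ℝ) else 0) +
          (if S2 t.1 (c j) then (1 : ℝ) else 0)) := by
      apply mul_nonneg (by positivity)
      refine Finset.sum_nonneg fun j _ => ?_
      split_ifs <;> norm_num
    by_cases hh : hit t
    · have hj0 : T t.1 t.2 (c hh.choose) := hh.choose_spec
      set j0 := hh.choose with hj0def
      have hf : ∀ b, f b t = b j0 := fun b => by simp only [f]; rw [dif_pos hh]
      have hb : ∀ b, fail b t ≤ ∑ j, (if j ≠ j0 then (if b j = b j0 then (1 : ℝ) else 0) else 0) *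
          ((if S1 t.2 (c j) then (1 : ℝ) else 0) + (if S2 t.1 (c j) then (1 : ℝ) else 0)) := by
        intro b
        have hterm : ∀ j, 0 ≤ (if j ≠ j0 then (if b j = b j0 then (1 : ℝ) else 0) else 0) *
          ((if S1 t.2 (c j) then (1 : ℝ) else 0) + (if S2 t.1 (c j) then (1 : ℝ) else 0)) := by
          intro j; split_ifs <;> norm_num
        by_cases hcol : ∃ j, j ≠ j0 ∧ b j = b j0 ∧ (S1 t.2 (c j) ∨ S2 t.1 (c j))
        · obtain ⟨j, hj, hbj, hS⟩ := hcol
          refine (hfail1 b).trans (le_trans ?_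
            (Finset.single_le_sum (fun j _ => hterm j) (Finset.mem_univ j)))
          rw [if_pos hj, if_pos hbj, one_mul]
          rcases hS with h | h
          · rw [if_pos h]; split_ifs <;> norm_num
          · rw [if_pos h]; split_ifs <;> norm_num
        · push Not at hcol
          have e1 : g1 b (f b t, t.2) = c j0 := by
            have hex : ∃ j, b j = f b t ∧ S1 t.2 (c j) := ⟨j0, (hf b).symm, hT1 _ _ _ hj0⟩
            simp only [g1]
            rw [dif_pos hex]
            have hs := hex.choose_spec
            by_contra hne
            have hne' : hex.choose ≠ j0 := fun h => hne (by rw [h])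
            exact (hcol _ hne' (hs.1.trans (hf b))).1 hs.2
          have e2 : g2 b (f b t, t.1) = c j0 := by
            have hex : ∃ j, b j = f b t ∧ S2 t.1 (c j) := ⟨j0, (hf b).symm, hT2 _ _ _ hj0⟩
            simp only [g2]
            rw [dif_pos hex]
            have hs := hex.choose_spec
            by_contra hne
            have hne' : hex.choose ≠ j0 := fun h => hne (by rw [h])
            exact (hcol _ hne' (hs.1.trans (hf b))).2 hs.2
          have : fail b t = 0 := by
            simp only [fail]
            rw [e1, e2, if_pos ⟨hj0, rfl⟩]
          rw [this]
          exact Finset.sum_nonneg fun j _ => hterm j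
      have hprod : 0 ≤ (∏ j, if T t.1 t.2 (c j) then (0 : ℝ) else 1) :=
        Finset.prod_nonneg fun j _ => by split_ifs <;> norm_num
      refine le_trans ?_ (le_add_of_nonneg_left hprod)
      rw [← Finset.mul_sum]
      have h2 : ∑ b, fail b t ≤ ∑ j, ((M : ℝ) ^ N * (M : ℝ)⁻¹) *
          ((if S1 t.2 (c j) then (1 : ℝ) else 0) + (if S2 t.1 (c j) then (1 : ℝ) else 0)) := by
        refine (Finset.sum_le_sum fun b _ => hb b).trans ?_
        rw [Finset.sum_comm]
        refine Finset.sum_le_sum fun j _ => ?_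
        rw [← Finset.sum_mul]
        apply mul_le_mul_of_nonneg_right
        · by_cases hj : j ≠ j0
          · simp only [if_pos hj]
            have := bin_count (M := M) j0 j hj
            rw [← div_eq_mul_inv, le_div_iff₀ hM0, mul_comm]
            exact this
          · simp only [if_neg hj, Finset.sum_const_zero]
            positivity
        · split_ifs <;> norm_num
      rw [← Finset.mul_sum] at h2
      have h3 := mul_le_mul_of_nonneg_left h2 (a := ((M : ℝ) ^ N)⁻¹) (by positivity)
      refine h3.trans (le_of_eq ?_)
      have : (M : ℝ) ^ N ≠ 0 := by positivity
      rw [← mul_assoc, ← mul_assoc, inv_mul_cancel₀ this, one_mul]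
    · have : (∏ j, if T t.1 t.2 (c j) then (0 : ℝ) else 1) = 1 := by
        refine Finset.prod_eq_one fun j _ => ?_
        rw [if_neg]
        exact fun h => hh ⟨j, h⟩
      rw [this]
      have h2 : ∑ b : Fin N → Fin M, ((M : ℝ) ^ N)⁻¹ * fail b t ≤
          ∑ b : Fin N → Fin M, ((M : ℝ) ^ N)⁻¹ * 1 :=
        Finset.sum_le_sum fun b _ => mul_le_mul_of_nonneg_left (hfail1 b) (by positivity)
      have h3 : ∑ b : Fin N → Fin M, ((M : ℝ) ^ N)⁻¹ * 1 = 1 := by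
        simp
        have : (M : ℝ) ^ N ≠ 0 := by positivity
        field_simp
      linarith
  obtain ⟨b, hb⟩ := avg_exists (fun _ : Fin N → Fin M => ((M : ℝ) ^ N)⁻¹)
    (fun b => ∑ t, q t * fail b t) (∑ t : U × V, q t * ((∏ j, if T t.1 t.2 (c j) then (0 : ℝ) else 1) +
        (M : ℝ)⁻¹ * ∑ j, ((if S1 t.2 (c j) then (1 : ℝ) else 0) +
          (if S2 t.1 (c j) then (1 : ℝ) else 0)))) (fun _ => by positivity)
    (by
      simp
      have : (M : ℝ) ^ N ≠ 0 := by positivity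
      field_simp)
    (by
      simp only [Finset.mul_sum]
      rw [Finset.sum_comm]
      refine Finset.sum_le_sum fun t _ => ?_
      have := mul_le_mul_of_nonneg_left (hpt t) (hq t)
      simp only [Finset.mul_sum] at this ⊢
      refine le_trans (le_of_eq ?_) this
      exact Finset.sum_congr rfl fun b _ => by ring)
  exact ⟨f b, g1 b, g2 b, hb⟩

theorem one_shot {U V Z : Type} [Fintype U] [Fintype V] [Fintype Z] [Nonempty Z]
    (q : U × V → ℝ) (hq : ∀ t, 0 ≤ q t) (hq1 : ∑ t, q t = 1)
    (W : U × V → Z → ℝ) (hW : ∀ t z, 0 ≤ W t z) (hW1 : ∀ t, ∑ z, W t z = 1)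
    (pZ : Z → ℝ) (hpZ : ∀ z, 0 ≤ pZ z) (hpZ1 : ∑ z, pZ z = 1)
    (T : U → V → Z → Prop) (S1 : V → Z → Prop)
    (S2 : U → Z → Prop) (hT1 : ∀ u v z, T u v z → S1 v z) (hT2 : ∀ u v z, T u v z → S2 u z)
    (A : ℝ) (hA : 0 < A) (hTA : ∀ u v z, T u v z → W (u, v) z ≤ A * pZ z)
    (κ1 κ2 : ℝ)
    (hκ1 : ∑ t : U × V, q t * ∑ z, pZ z * (if S1 t.2 z then (1 : ℝ) else 0) ≤ κ1)
    (hκ2 : ∑ t : U × V, q t * ∑ z, pZ z * (if S2 t.1 z then (1 : ℝ) else 0) ≤ κ2)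
    (N M : ℕ) (hM : 0 < M) :
    ∃ (f : U × V → Fin M) (g1 : Fin M × V → Z) (g2 : Fin M × U → Z),
      ∑ t : U × V, q t * (if T t.1 t.2 (g1 (f t, t.2)) ∧ g1 (f t, t.2) = g2 (f t, t.1)
        then (0 : ℝ) else 1) ≤
      ∑ t : U × V, q t * (∑ z, W t z * (if T t.1 t.2 z then (0 : ℝ) else 1)) +
        Real.exp (-(N / A)) + N * (κ1 + κ2) / M := by
  have hM0 : (0 : ℝ) < M := by exact_mod_cast hM
  have hmiss : ∀ t : U × V, ∑ c : Fin N → Z, (∏ j, pZ (c j)) *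
      (∏ j, if T t.1 t.2 (c j) then (0 : ℝ) else 1) ≤
      (∑ z, W t z * (if T t.1 t.2 z then (0 : ℝ) else 1)) + Real.exp (-(N / A)) := by
    intro t
    simp only [← Finset.prod_mul_distrib]
    rw [sum_prod_fun (fun _ z => pZ z * if T t.1 t.2 z then (0 : ℝ) else 1)]
    rw [Finset.prod_const, Finset.card_univ, Fintype.card_fin]
    set τ := ∑ z, pZ z * (if T t.1 t.2 z then (1 : ℝ) else 0) with hτ
    set s := ∑ z, W t z * (if T t.1 t.2 z then (1 : ℝ) else 0) with hs
    have e1 : ∑ z, pZ z * (if T t.1 t.2 z then (0 : ℝ) else 1) = 1 - τ := by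
      have h0 : (∑ z, pZ z * (if T t.1 t.2 z then (0 : ℝ) else 1)) + τ = ∑ z, pZ z := by
        rw [hτ, ← Finset.sum_add_distrib]
        exact Finset.sum_congr rfl fun z _ => by split_ifs <;> ring
      linarith [hpZ1]
    have e2 : ∑ z, W t z * (if T t.1 t.2 z then (0 : ℝ) else 1) = 1 - s := by
      have h0 : (∑ z, W t z * (if T t.1 t.2 z then (0 : ℝ) else 1)) + s = ∑ z, W t z := by
        rw [hs, ← Finset.sum_add_distrib]
        exact Finset.sum_congr rfl fun z _ => by split_ifs <;> ring
      linarith [hW1 t]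
    have hsτ : s ≤ A * τ := by
      rw [hs, hτ, Finset.mul_sum]
      refine Finset.sum_le_sum fun z _ => ?_
      split_ifs with h
      · have := hTA _ _ _ h
        simpa using this
      · simp
    have hs0 : 0 ≤ s := Finset.sum_nonneg fun z _ => mul_nonneg (hW _ _) (by split_ifs <;> norm_num)
    have h1τ : 0 ≤ 1 - τ := by
      rw [← e1]
      exact Finset.sum_nonneg fun z _ => mul_nonneg (hpZ _) (by split_ifs <;> norm_num)
    have hs1 : 0 ≤ 1 - s := by
      rw [← e2]
      exact Finset.sum_nonneg fun z _ => mul_nonneg (hW _ _) (by split_ifs <;> norm_num)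
    rw [e1, e2]
    have h1 : (1 - τ) ^ N ≤ Real.exp (-(N * τ)) := by
      have : 1 - τ ≤ Real.exp (-τ) := by
        have := Real.add_one_le_exp (-τ); linarith
      calc (1 - τ) ^ N ≤ (Real.exp (-τ)) ^ N := pow_le_pow_left₀ h1τ this N
        _ = Real.exp (-(N * τ)) := by rw [← Real.exp_nat_mul]; congr 1; ring
    have h2 : Real.exp (-(N * τ)) ≤ Real.exp (s * (-(N / A)) + (1 - s) * 0) := by
      apply Real.exp_le_exp.mpr
      have : s / A ≤ τ := by rw [div_le_iff₀ hA]; linarith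
      have := mul_le_mul_of_nonneg_left this (Nat.cast_nonneg (α := ℝ) N)
      have h3 : s * (-(N / A)) = - ((N : ℝ) * (s / A)) := by ring
      rw [h3]; linarith
    have h3 := convexOn_exp.2 (Set.mem_univ (-(N / A) : ℝ)) (Set.mem_univ (0 : ℝ)) hs0 hs1
      (by ring)
    simp only [smul_eq_mul, Real.exp_zero] at h3
    have h4 : s * Real.exp (-(N / A)) ≤ Real.exp (-(N / A)) := by
      have := Real.exp_pos (-(N / A) : ℝ)
      nlinarith
    linarith
  have hcol : ∀ φ : Z → ℝ, ∑ c : Fin N → Z, (∏ j, pZ (c j)) * ∑ j, φ (c j) =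
      N * ∑ z, pZ z * φ z := by
    intro φ
    simp only [Finset.mul_sum]
    rw [Finset.sum_comm]
    simp only [iid_marg pZ hpZ1 φ]
    simp [Finset.mul_sum]
  obtain ⟨c, hc⟩ := avg_exists (fun c : Fin N → Z => ∏ j, pZ (c j))
    (fun c => ∑ t : U × V, q t * ((∏ j, if T t.1 t.2 (c j) then (0 : ℝ) else 1) +
        (M : ℝ)⁻¹ * ∑ j, ((if S1 t.2 (c j) then (1 : ℝ) else 0) +
          (if S2 t.1 (c j) then (1 : ℝ) else 0))))
    (∑ t : U × V, q t * (∑ z, W t z * (if T t.1 t.2 z then (0 : ℝ) else 1)) +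
        Real.exp (-(N / A)) + N * (κ1 + κ2) / M)
    (fun c => Finset.prod_nonneg fun j _ => hpZ _)
    (by rw [sum_prod_fun (fun _ z => pZ z)]; simp [hpZ1])
    (by
      simp only [Finset.mul_sum (s := (Finset.univ : Finset (U × V)))]
      rw [Finset.sum_comm]
      have e : ∀ t : U × V, ∑ c : Fin N → Z, (∏ j, pZ (c j)) * (q t *
          ((∏ j, if T t.1 t.2 (c j) then (0 : ℝ) else 1) +
        (M : ℝ)⁻¹ * ∑ j, ((if S1 t.2 (c j) then (1 : ℝ) else 0) +
          (if S2 t.1 (c j) then (1 : ℝ) else 0)))) =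
          q t * (∑ c : Fin N → Z, (∏ j, pZ (c j)) *
            (∏ j, if T t.1 t.2 (c j) then (0 : ℝ) else 1)) +
          (M : ℝ)⁻¹ * N * (q t * (∑ z, pZ z * (if S1 t.2 z then (1 : ℝ) else 0)) +
            q t * (∑ z, pZ z * (if S2 t.1 z then (1 : ℝ) else 0))) := by
        intro t
        have := hcol (fun z => (if S1 t.2 z then (1 : ℝ) else 0) + (if S2 t.1 z then (1 : ℝ) else 0))
        simp only [mul_add (pZ _), Finset.sum_add_distrib (f := fun z => pZ z * (if S1 t.2 z then (1 : ℝ) else 0))] at this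
        have h2 : (M : ℝ)⁻¹ * N * (q t * (∑ z, pZ z * (if S1 t.2 z then (1 : ℝ) else 0)) +
            q t * (∑ z, pZ z * (if S2 t.1 z then (1 : ℝ) else 0))) = (M : ℝ)⁻¹ * q t *
            (N * ((∑ z, pZ z * (if S1 t.2 z then (1 : ℝ) else 0)) +
            (∑ z, pZ z * (if S2 t.1 z then (1 : ℝ) else 0)))) := by ring
        rw [h2, ← this, Finset.mul_sum, Finset.mul_sum, ← Finset.sum_add_distrib]
        exact Finset.sum_congr rfl fun c _ => by ring
      simp only [e]
      rw [Finset.sum_add_distrib]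
      apply add_le_add
      · have : ∑ t : U × V, q t * (∑ z, W t z * (if T t.1 t.2 z then (0 : ℝ) else 1)) +
          Real.exp (-(N / A)) = ∑ t : U × V, q t * ((∑ z, W t z * (if T t.1 t.2 z then (0 : ℝ) else 1))
          + Real.exp (-(N / A))) := by
          simp only [mul_add, Finset.sum_add_distrib, ← Finset.sum_mul, hq1, one_mul]
        rw [this]
        exact Finset.sum_le_sum fun t _ => mul_le_mul_of_nonneg_left (hmiss t) (hq t)
      · rw [← Finset.mul_sum, Finset.sum_add_distrib]
        have := mul_le_mul_of_nonneg_left (add_le_add hκ1 hκ2) (a := (M : ℝ)⁻¹ * N) (by positivity)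
        refine this.trans (le_of_eq ?_)
        field_simp)
  obtain ⟨f, g1, g2, h⟩ := bin_stage q hq T S1 S2 hT1 hT2 N M hM c
  exact ⟨f, g1, g2, h.trans hc⟩

end partC1


section partC2

theorem chernoff {S : Type} [Fintype S] (p φ : S → ℝ) (hp : ∀ s, 0 ≤ p s) (hp1 : ∑ s, p s = 1)
    (E ε : ℝ) (hE : ∑ s, p s * φ s ≤ E) (hε : 0 < ε) :
    ∃ ρ : ℝ, 0 ≤ ρ ∧ ρ < 1 ∧ ∀ n : ℕ, ∑ s : Fin n → S, (∏ i, p (s i)) *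
      (if ∑ i, φ (s i) ≤ n * (E + ε) then (0 : ℝ) else 1) ≤ ρ ^ n := by
  let ψ : S → ℝ := fun s => φ s - (E + ε)
  let B : ℝ := 1 + ε + ∑ s, |ψ s|
  have hsum0 : 0 ≤ ∑ s, |ψ s| := Finset.sum_nonneg fun s _ => abs_nonneg _
  have hB1 : 1 ≤ B := by simp only [B]; linarith
  have hBε : ε ≤ B := by simp only [B]; linarith
  have hBψ : ∀ s, |ψ s| ≤ B := fun s => by
    have := Finset.single_le_sum (f := fun s => |ψ s|) (fun s _ => abs_nonneg _) (Finset.mem_univ s)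
    simp only [B]; linarith
  let t : ℝ := ε / (2 * B ^ 2)
  have hB0 : 0 < B := by linarith
  have ht : 0 < t := by simp only [t]; positivity
  have htB : t * B ≤ 1 := by
    have : t * B = ε / (2 * B) := by simp only [t]; field_simp
    rw [this, div_le_one (by positivity)]; linarith
  have hψ : ∑ s, p s * ψ s ≤ -ε := by
    simp only [ψ, mul_sub, Finset.sum_sub_distrib, ← Finset.sum_mul, hp1]
    linarith
  refine ⟨∑ s, p s * Real.exp (t * ψ s), Finset.sum_nonneg fun s _ =>
    mul_nonneg (hp s) (Real.exp_pos _).le, ?_, ?_⟩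
  · have h1 : ∀ s, p s * Real.exp (t * ψ s) ≤ p s + t * (p s * ψ s) + p s * (t ^ 2 * B ^ 2) := by
      intro s
      have habs : |t * ψ s| ≤ t * B := by
        rw [abs_mul, abs_of_pos ht]; exact mul_le_mul_of_nonneg_left (hBψ s) ht.le
      have h2 := (abs_le.mp (Real.abs_exp_sub_one_sub_id_le (habs.trans htB))).2
      have h3 : (t * ψ s) ^ 2 ≤ t ^ 2 * B ^ 2 := by
        rw [← sq_abs, ← mul_pow]
        exact pow_le_pow_left₀ (abs_nonneg _) habs 2
      have := mul_le_mul_of_nonneg_left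
        (show Real.exp (t * ψ s) ≤ 1 + t * ψ s + t ^ 2 * B ^ 2 by linarith) (hp s)
      linarith
    have h4 := Finset.sum_le_sum fun s (_ : s ∈ Finset.univ) => h1 s
    simp only [Finset.sum_add_distrib, ← Finset.mul_sum, ← Finset.sum_mul, hp1] at h4
    have h5 := mul_le_mul_of_nonneg_left hψ ht.le
    have h6 : t ^ 2 * B ^ 2 = t * ε / 2 := by simp only [t]; field_simp
    have := mul_pos ht hε
    linarith
  · intro n
    have := sum_prod_fun (N := n) (fun _ s => p s * Real.exp (t * ψ s))
    rw [Finset.prod_const, Finset.card_univ, Fintype.card_fin] at this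
    rw [← this]
    refine Finset.sum_le_sum fun s _ => ?_
    rw [Finset.prod_mul_distrib]
    apply mul_le_mul_of_nonneg_left _ (Finset.prod_nonneg fun i _ => hp _)
    rw [← Real.exp_sum, ← Finset.mul_sum]
    split_ifs with h
    · exact (Real.exp_pos _).le
    · push Not at h
      apply Real.one_le_exp
      apply mul_nonneg ht.le
      simp only [ψ, Finset.sum_sub_distrib]
      simp
      linarith

theorem chernoff_ratio {S : Type} [Fintype S] (p a b : S → ℝ) (hp : ∀ s, 0 ≤ p s)
    (hp1 : ∑ s, p s = 1) (ha : ∀ s, p s ≠ 0 → 0 < a s) (hb : ∀ s, p s ≠ 0 → 0 < b s)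
    (E ε : ℝ) (hE : ∑ s, p s * (Real.logb 2 (a s) - Real.logb 2 (b s)) ≤ E) (hε : 0 < ε) :
    ∃ ρ : ℝ, 0 ≤ ρ ∧ ρ < 1 ∧ ∀ n : ℕ, ∑ s : Fin n → S, (∏ i, p (s i)) *
      (if ∏ i, a (s i) ≤ (2 : ℝ) ^ ((n : ℝ) * (E + ε)) * ∏ i, b (s i) then (0 : ℝ) else 1)
        ≤ ρ ^ n := by
  obtain ⟨ρ, h0, h1, h⟩ := chernoff p _ hp hp1 E ε hE hε
  refine ⟨ρ, h0, h1, fun n => le_trans (Finset.sum_le_sum fun s _ => ?_) (h n)⟩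
  by_cases hz : ∏ i, p (s i) = 0
  · rw [hz, zero_mul, zero_mul]
  have hne : ∀ i, p (s i) ≠ 0 := fun i =>
    Finset.prod_ne_zero_iff.mp hz i (Finset.mem_univ i)
  apply mul_le_mul_of_nonneg_left _ (Finset.prod_nonneg fun i _ => hp _)
  split_ifs with h1 h2 h2
  · exact le_rfl
  · exact zero_le_one
  · exfalso
    apply h1
    have ea : ∏ i, a (s i) = (2 : ℝ) ^ (∑ i, Real.logb 2 (a (s i))) := by
      rw [Real.rpow_sum_of_pos (by norm_num)]
      exact Finset.prod_congr rfl fun i _ =>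
        (Real.rpow_logb (by norm_num) (by norm_num) (ha _ (hne i))).symm
    have eb : ∏ i, b (s i) = (2 : ℝ) ^ (∑ i, Real.logb 2 (b (s i))) := by
      rw [Real.rpow_sum_of_pos (by norm_num)]
      exact Finset.prod_congr rfl fun i _ =>
        (Real.rpow_logb (by norm_num) (by norm_num) (hb _ (hne i))).symm
    rw [ea, eb, ← Real.rpow_add (by norm_num)]
    apply Real.rpow_le_rpow_of_exponent_le (by norm_num)
    rw [Finset.sum_sub_distrib] at h2
    linarith
  · exact le_rfl

theorem triple_sum {n : ℕ} {X Y C : Type} [Fintype X] [Fintype Y] [Fintype C]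
    (F : (Fin n → X) → (Fin n → Y) → (Fin n → C) → ℝ) :
    ∑ t : (Fin n → X) × (Fin n → Y), ∑ z, F t.1 t.2 z =
      ∑ s : Fin n → X × Y × C, F (fun i => (s i).1) (fun i => (s i).2.1) (fun i => (s i).2.2) := by
  rw [← Fintype.sum_prod_type (f := fun w : ((Fin n → X) × (Fin n → Y)) × (Fin n → C) =>
    F w.1.1 w.1.2 w.2)]
  exact Fintype.sum_equiv
    { toFun := fun w i => (w.1.1 i, w.1.2 i, w.2 i)
      invFun := fun s => ((fun i => (s i).1, fun i => (s i).2.1), fun i => (s i).2.2)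
      left_inv := fun w => rfl
      right_inv := fun s => rfl } _ _ (fun w => rfl)

theorem kappa_bound {n : ℕ} {Y C : Type} [Fintype Y] [Fintype C] (pY : Y → ℝ) (pC : C → ℝ)
    (pYC : Y → C → ℝ) (hYC : ∀ y c, 0 ≤ pYC y c) (h1 : ∑ y, ∑ c, pYC y c = 1)
    (κ : ℝ) (hκ : 0 ≤ κ) (S : (Fin n → Y) → (Fin n → C) → Prop)
    (hS : ∀ y z, S y z → ∏ i, (pY (y i) * pC (z i)) ≤ κ * ∏ i, pYC (y i) (z i)) :
    ∑ y : Fin n → Y, (∏ i, pY (y i)) * ∑ z : Fin n → C, (∏ i, pC (z i)) *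
      (if S y z then (1 : ℝ) else 0) ≤ κ := by
  have h2 : ∑ y : Fin n → Y, ∑ z : Fin n → C, κ * ∏ i, pYC (y i) (z i) = κ := by
    simp only [← Finset.mul_sum]
    simp only [fun y : Fin n → Y => sum_prod_fun (fun i c => pYC (y i) c)]
    rw [sum_prod_fun (fun (_ : Fin n) y => ∑ c, pYC y c)]
    simp [h1]
  refine le_trans (Finset.sum_le_sum fun y _ => ?_) (le_of_eq h2)
  rw [Finset.mul_sum]
  refine Finset.sum_le_sum fun z _ => ?_
  split_ifs with h
  · have h := hS _ _ h
    rw [Finset.prod_mul_distrib] at h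
    linarith
  · simp only [mul_zero]
    exact mul_nonneg hκ (Finset.prod_nonneg fun i _ => hYC _ _)

theorem ite_le_ite {P Q : Prop} {_ : Decidable P} {_ : Decidable Q} (h : Q → P) :
    (if P then (0 : ℝ) else 1) ≤ if Q then (0 : ℝ) else 1 := by
  split_ifs with h1 h2 h2
  · exact le_rfl
  · exact zero_le_one
  · exact absurd (h h2) h1
  · exact le_rfl

theorem ite_union {P A B C D E : Prop} [Decidable P] [Decidable A] [Decidable B] [Decidable C]
    [Decidable D] [Decidable E] (h : A → B → C → D → E → P) :
    (if P then (0 : ℝ) else 1) ≤ (if A then (0 : ℝ) else 1) + (if B then (0 : ℝ) else 1) +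
      (if C then (0 : ℝ) else 1) + (if D then (0 : ℝ) else 1) + (if E then (0 : ℝ) else 1) := by
  split_ifs <;> first | (exfalso; tauto; done) | (norm_num; done)

end partC2


section partC3
open TWR

/-- The exponent `J = I(X,Y;C)` written with a reference law `pC`. -/
def Jexp {X Y C : Type} [Fintype X] [Fintype Y] [Fintype C] (q : X × Y → ℝ)
    (W : X × Y → C → ℝ) (pC : C → ℝ) : ℝ :=
  ∑ x, ∑ y, ∑ c, q (x, y) * W (x, y) c * (Real.logb 2 (W (x, y) c) - Real.logb 2 (pC c))

/-- Minus `I(Y;C)`. -/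
def Kexp {X Y C : Type} [Fintype X] [Fintype Y] [Fintype C] (q : X × Y → ℝ)
    (W : X × Y → C → ℝ) (pC : C → ℝ) : ℝ :=
  ∑ x, ∑ y, ∑ c, q (x, y) * W (x, y) c *
    (Real.logb 2 ((∑ x', q (x', y)) * pC c) - Real.logb 2 (∑ x', q (x', y) * W (x', y) c))

theorem mi_eq {X Y C : Type} [Fintype X] [Fintype Y] [Fintype C] (q : X × Y → ℝ)
    (W : X × Y → C → ℝ) (pC : C → ℝ) (hq : ∀ t, 0 ≤ q t) (hW1 : ∀ t, ∑ c, W t c = 1)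
    (hpC : ∀ x y c, q (x, y) * W (x, y) c ≠ 0 → 0 < pC c) :
    condMI (fun t : X × Y × C => q (t.1, t.2.1) * W (t.1, t.2.1) t.2.2) =
      Jexp q W pC + Kexp q W pC := by
  rw [condMI_expand, Jexp, Kexp]
  simp only [← Finset.sum_add_distrib]
  refine Finset.sum_congr rfl fun x _ => Finset.sum_congr rfl fun y _ =>
    Finset.sum_congr rfl fun c _ => ?_
  by_cases h : q (x, y) * W (x, y) c = 0
  · simp [h]
  have h1 : q (x, y) ≠ 0 := left_ne_zero_of_mul h
  have h2 : W (x, y) c ≠ 0 := right_ne_zero_of_mul h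
  have h3 : 0 < ∑ x', q (x', y) := lt_of_lt_of_le (lt_of_le_of_ne (hq _) h1.symm)
    (Finset.single_le_sum (f := fun x' => q (x', y)) (fun _ _ => hq _) (Finset.mem_univ x))
  simp only [← Finset.mul_sum, hW1, mul_one]
  rw [Real.logb_mul h1 h2, Real.logb_mul h3.ne' (hpC x y c h).ne']
  ring

theorem Jexp_nonneg {X Y C : Type} [Fintype X] [Fintype Y] [Fintype C] (q : X × Y → ℝ)
    (W : X × Y → C → ℝ) (pC : C → ℝ) (hq : ∀ t, 0 ≤ q t) (hq1 : ∑ t, q t = 1)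
    (hW : ∀ t c, 0 ≤ W t c) (hW1 : ∀ t, ∑ c, W t c = 1)
    (hpC0 : ∀ c, 0 ≤ pC c) (hpC1 : ∑ c, pC c = 1)
    (hpC : ∀ x y c, q (x, y) * W (x, y) c ≠ 0 → 0 < pC c) : 0 ≤ Jexp q W pC := by
  have h := gibbs (fun s : (X × Y) × C => q s.1 * W s.1 s.2) (fun s => q s.1 * pC s.2)
    (fun s => mul_nonneg (hq _) (hW _ _)) (fun s => mul_nonneg (hq _) (hpC0 _))
    (fun s hs => mul_ne_zero (left_ne_zero_of_mul hs) (hpC s.1.1 s.1.2 s.2 hs).ne')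
    (by
      simp only [Fintype.sum_prod_type, ← Finset.mul_sum, hpC1, hW1, le_refl])
  refine h.trans (le_of_eq ?_)
  rw [Fintype.sum_prod_type, Fintype.sum_prod_type, Jexp]
  refine Finset.sum_congr rfl fun x _ => Finset.sum_congr rfl fun y _ =>
    Finset.sum_congr rfl fun c _ => ?_
  by_cases h : q (x, y) * W (x, y) c = 0
  · simp [h]
  have h1 : q (x, y) ≠ 0 := left_ne_zero_of_mul h
  have h2 : W (x, y) c ≠ 0 := right_ne_zero_of_mul h
  simp only
  rw [Real.logb_mul h1 h2, Real.logb_mul h1 (hpC x y c h).ne']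
  ring

theorem code_exists {X Y C : Type} [Fintype X] [Fintype Y] [Fintype C] [Nonempty C]
    (q : X × Y → ℝ) (hq : ∀ t, 0 ≤ q t) (hq1 : ∑ t, q t = 1)
    (W : X × Y → C → ℝ) (hW : ∀ t c, 0 ≤ W t c) (hW1 : ∀ t, ∑ c, W t c = 1)
    (e1 e2 : X → Y → C → ℝ) (d1 d2 : ℝ)
    (hd1 : ∑ x, ∑ y, ∑ c, q (x, y) * W (x, y) c * e1 x y c ≤ d1)
    (hd2 : ∑ x, ∑ y, ∑ c, q (x, y) * W (x, y) c * e2 x y c ≤ d2)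
    (r : ℝ) (hr0 : 0 ≤ r)
    (hr1 : condMI (fun t : X × Y × C => q (t.1, t.2.1) * W (t.1, t.2.1) t.2.2) ≤ r)
    (hr2 : condMI (fun t : Y × X × C => q (t.2.1, t.1) * W (t.2.1, t.1) t.2.2) ≤ r)
    (ε η : ℝ) (hε : 0 < ε) (hη : 0 < η) :
    ∃ (n m : ℕ) (f : (Fin n → X) × (Fin n → Y) → Fin m)
      (g1 : Fin m × (Fin n → Y) → Fin n → C) (g2 : Fin m × (Fin n → X) → Fin n → C),
      0 < n ∧ Real.logb 2 m / n ≤ r + 5 * ε ∧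
      ∑ t : (Fin n → X) × (Fin n → Y), iid q n t *
        (if (∑ i, e1 (t.1 i) (t.2 i) (g1 (f t, t.2) i) ≤ n * (d1 + ε) ∧
          ∑ i, e2 (t.1 i) (t.2 i) (g1 (f t, t.2) i) ≤ n * (d2 + ε)) ∧
          g1 (f t, t.2) = g2 (f t, t.1) then (0 : ℝ) else 1) ≤ η := by
  let p : X × Y × C → ℝ := fun s => q (s.1, s.2.1) * W (s.1, s.2.1) s.2.2
  let pC : C → ℝ := fun c => ∑ x, ∑ y, q (x, y) * W (x, y) c
  let pY : Y → ℝ := fun y => ∑ x, q (x, y)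
  let pX : X → ℝ := fun x => ∑ y, q (x, y)
  let pYC : Y → C → ℝ := fun y c => ∑ x, q (x, y) * W (x, y) c
  let pXC : X → C → ℝ := fun x c => ∑ y, q (x, y) * W (x, y) c
  have hp : ∀ s, 0 ≤ p s := fun s => mul_nonneg (hq _) (hW _ _)
  have hqq : ∑ x, ∑ y, q (x, y) = 1 := by rw [← Fintype.sum_prod_type']; exact hq1
  have hp1 : ∑ s, p s = 1 := by
    rw [Fintype.sum_prod_type]
    simp only [Fintype.sum_prod_type, p, ← Finset.mul_sum, hW1, mul_one, hqq]
  have hpX : ∀ x y, q (x, y) ≤ pX x := fun x y =>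
    Finset.single_le_sum (f := fun y => q (x, y)) (fun _ _ => hq _) (Finset.mem_univ y)
  have hpY : ∀ x y, q (x, y) ≤ pY y := fun x y =>
    Finset.single_le_sum (f := fun x => q (x, y)) (fun _ _ => hq _) (Finset.mem_univ x)
  have hpXC : ∀ x y c, q (x, y) * W (x, y) c ≤ pXC x c := fun x y c =>
    Finset.single_le_sum (f := fun y => q (x, y) * W (x, y) c)
      (fun _ _ => mul_nonneg (hq _) (hW _ _)) (Finset.mem_univ y)
  have hpYC : ∀ x y c, q (x, y) * W (x, y) c ≤ pYC y c := fun x y c =>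
    Finset.single_le_sum (f := fun x => q (x, y) * W (x, y) c)
      (fun _ _ => mul_nonneg (hq _) (hW _ _)) (Finset.mem_univ x)
  have hXC0 : ∀ x c, 0 ≤ pXC x c := fun x c =>
    Finset.sum_nonneg fun _ _ => mul_nonneg (hq _) (hW _ _)
  have hYC0 : ∀ y c, 0 ≤ pYC y c := fun y c =>
    Finset.sum_nonneg fun _ _ => mul_nonneg (hq _) (hW _ _)
  have hpCle : ∀ x y c, q (x, y) * W (x, y) c ≤ pC c := fun x y c =>
    (hpXC x y c).trans (Finset.single_le_sum (f := fun x => pXC x c)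
      (fun _ _ => hXC0 _ _) (Finset.mem_univ x))
  have hpC0 : ∀ c, 0 ≤ pC c := fun c => Finset.sum_nonneg fun x _ => hXC0 x c
  have hXC1 : ∑ x, ∑ c, pXC x c = 1 := by
    simp only [pXC]
    rw [← hqq]
    refine Finset.sum_congr rfl fun x _ => ?_
    rw [Finset.sum_comm]
    simp only [← Finset.mul_sum, hW1, mul_one]
  have hYC1 : ∑ y, ∑ c, pYC y c = 1 := by
    simp only [pYC]
    rw [← hqq, Finset.sum_comm (f := fun x y => q (x, y))]
    refine Finset.sum_congr rfl fun y _ => ?_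
    rw [Finset.sum_comm]
    simp only [← Finset.mul_sum, hW1, mul_one]
  have hpC1 : ∑ c, pC c = 1 := by
    rw [← hXC1, Finset.sum_comm (f := fun x c => pXC x c)]
  have ppos : ∀ s, p s ≠ 0 → 0 < p s := fun s h => lt_of_le_of_ne (hp s) (Ne.symm h)
  have qpos : ∀ s, p s ≠ 0 → 0 < q (s.1, s.2.1) := fun s h =>
    lt_of_le_of_ne (hq _) (left_ne_zero_of_mul h).symm
  have Wpos : ∀ s, p s ≠ 0 → 0 < W (s.1, s.2.1) s.2.2 := fun s h =>
    lt_of_le_of_ne (hW _ _) (right_ne_zero_of_mul h).symm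
  have Cpos : ∀ s, p s ≠ 0 → 0 < pC s.2.2 := fun s h => (ppos s h).trans_le (hpCle _ _ _)
  let J := Jexp q W pC
  let R1 := Kexp q W pC
  let R2 := Kexp (fun t : Y × X => q (t.2, t.1)) (fun t : Y × X => W (t.2, t.1)) pC
  have hJ0 : 0 ≤ J := Jexp_nonneg q W pC hq hq1 hW hW1 hpC0 hpC1 (fun x y c h => Cpos (x, y, c) h)
  have hI1 : J + R1 ≤ r := by
    rw [← mi_eq q W pC hq hW1 (fun x y c h => Cpos (x, y, c) h)]; exact hr1
  have hI2 : J + R2 ≤ r := by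
    have := mi_eq (fun t : Y × X => q (t.2, t.1)) (fun t : Y × X => W (t.2, t.1)) pC
      (fun t => hq _) (fun t => hW1 _) (fun y x c h => Cpos (x, y, c) h)
    have hJ : Jexp (fun t : Y × X => q (t.2, t.1)) (fun t : Y × X => W (t.2, t.1)) pC = J := by
      simp only [J, Jexp]
      exact Finset.sum_comm
    rw [hJ] at this
    rw [← this]; exact hr2
  obtain ⟨ρ1, a1, b1, c1⟩ := chernoff_ratio p (fun s => W (s.1, s.2.1) s.2.2)
    (fun s => pC s.2.2) hp hp1 Wpos Cpos J ε
    (by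
      rw [Fintype.sum_prod_type]
      simp only [Fintype.sum_prod_type, p]
      exact le_rfl) hε
  obtain ⟨ρ2, a2, b2, c2⟩ := chernoff_ratio p (fun s => pY s.2.1 * pC s.2.2)
    (fun s => pYC s.2.1 s.2.2) hp hp1
    (fun s h => mul_pos ((qpos s h).trans_le (hpY _ _)) (Cpos s h))
    (fun s h => (ppos s h).trans_le (hpYC _ _ _)) R1 ε
    (by
      rw [Fintype.sum_prod_type]
      simp only [Fintype.sum_prod_type, p]
      exact le_rfl) hε
  obtain ⟨ρ3, a3, b3, c3⟩ := chernoff_ratio p (fun s => pX s.1 * pC s.2.2)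
    (fun s => pXC s.1 s.2.2) hp hp1
    (fun s h => mul_pos ((qpos s h).trans_le (hpX _ _)) (Cpos s h))
    (fun s h => (ppos s h).trans_le (hpXC _ _ _)) R2 ε
    (by
      rw [Fintype.sum_prod_type]
      simp only [Fintype.sum_prod_type, p]
      rw [Finset.sum_comm]
      exact le_rfl) hε
  obtain ⟨ρ4, a4, b4, c4⟩ := chernoff p (fun s => e1 s.1 s.2.1 s.2.2) hp hp1 d1 ε
    (by
      rw [Fintype.sum_prod_type]
      simp only [Fintype.sum_prod_type, p]
      exact hd1) hε
  obtain ⟨ρ5, a5, b5, c5⟩ := chernoff p (fun s => e2 s.1 s.2.1 s.2.2) hp hp1 d2 ε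
    (by
      rw [Fintype.sum_prod_type]
      simp only [Fintype.sum_prod_type, p]
      exact hd2) hε
  let ρ0 : ℝ := (2 : ℝ) ^ (-ε)
  have a0 : 0 ≤ ρ0 := by positivity
  have b0 : ρ0 < 1 := Real.rpow_lt_one_of_one_lt_of_neg (by norm_num) (by linarith)
  have hlim : Filter.Tendsto (fun n : ℕ => ρ1 ^ n + ρ2 ^ n + ρ3 ^ n + ρ4 ^ n + ρ5 ^ n + 5 * ρ0 ^ n)
      Filter.atTop (nhds (0 + 0 + 0 + 0 + 0 + 5 * 0)) :=
    (((((tendsto_pow_atTop_nhds_zero_of_lt_one a1 b1).add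
      (tendsto_pow_atTop_nhds_zero_of_lt_one a2 b2)).add
      (tendsto_pow_atTop_nhds_zero_of_lt_one a3 b3)).add
      (tendsto_pow_atTop_nhds_zero_of_lt_one a4 b4)).add
      (tendsto_pow_atTop_nhds_zero_of_lt_one a5 b5)).add
      ((tendsto_pow_atTop_nhds_zero_of_lt_one a0 b0).const_mul 5)
  have hev := hlim.eventually (gt_mem_nhds (show (0 + 0 + 0 + 0 + 0 + 5 * 0 : ℝ) < η by simpa using hη))
  obtain ⟨n, hn, hnε⟩ := (hev.and (Filter.eventually_ge_atTop (⌈1 / ε⌉₊ + 1))).exists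
  have hn0 : 0 < n := by omega
  have hnR : (0 : ℝ) < n := by exact_mod_cast hn0
  have hninv : 1 / (n : ℝ) ≤ ε := by
    have : 1 / ε ≤ n := (Nat.le_ceil _).trans (by exact_mod_cast (by omega : ⌈1 / ε⌉₊ ≤ n))
    rw [div_le_iff₀ hε] at this
    rw [div_le_iff₀ hnR]; linarith
  let A : ℝ := (2 : ℝ) ^ ((n : ℝ) * (J + ε))
  let κ1 : ℝ := (2 : ℝ) ^ ((n : ℝ) * (R1 + ε))
  let κ2 : ℝ := (2 : ℝ) ^ ((n : ℝ) * (R2 + ε))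
  let N : ℕ := ⌈(2 : ℝ) ^ ((n : ℝ) * (J + 2 * ε))⌉₊
  let M : ℕ := ⌈(2 : ℝ) ^ ((n : ℝ) * (r + 4 * ε))⌉₊
  have hA0 : 0 < A := by positivity
  have hρ0n : ρ0 ^ n = (2 : ℝ) ^ ((n : ℝ) * (-ε)) := by
    simp only [ρ0]
    rw [← Real.rpow_natCast, ← Real.rpow_mul (by norm_num)]; congr 1; ring
  have hNge : (2 : ℝ) ^ ((n : ℝ) * (J + 2 * ε)) ≤ N := Nat.le_ceil _
  have hMge : (2 : ℝ) ^ ((n : ℝ) * (r + 4 * ε)) ≤ M := Nat.le_ceil _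
  have one_le : ∀ a : ℝ, 0 ≤ a → (1 : ℝ) ≤ (2 : ℝ) ^ ((n : ℝ) * a) := fun a ha =>
    Real.one_le_rpow (by norm_num) (by positivity)
  have ceil2 : ∀ a : ℝ, 1 ≤ a → (⌈a⌉₊ : ℝ) ≤ 2 * a := fun a ha => by
    have := (Nat.ceil_lt_add_one (show 0 ≤ a by linarith)).le
    linarith
  have hNle : (N : ℝ) ≤ 2 * (2 : ℝ) ^ ((n : ℝ) * (J + 2 * ε)) := ceil2 _ (one_le _ (by linarith))
  have hMle : (M : ℝ) ≤ 2 * (2 : ℝ) ^ ((n : ℝ) * (r + 4 * ε)) := ceil2 _ (one_le _ (by linarith))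
  have hMR : (0 : ℝ) < M := lt_of_lt_of_le (by positivity) hMge
  have hM : 0 < M := by exact_mod_cast hMR
  -- typical sets
  obtain ⟨S1, hS1⟩ : ∃ S1 : (Fin n → Y) → (Fin n → C) → Prop, ∀ y z, S1 y z ↔
    ∏ i, (pY (y i) * pC (z i)) ≤ κ1 * ∏ i, pYC (y i) (z i) := ⟨_, fun _ _ => Iff.rfl⟩
  obtain ⟨S2, hS2⟩ : ∃ S2 : (Fin n → X) → (Fin n → C) → Prop, ∀ x z, S2 x z ↔
    ∏ i, (pX (x i) * pC (z i)) ≤ κ2 * ∏ i, pXC (x i) (z i) := ⟨_, fun _ _ => Iff.rfl⟩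
  obtain ⟨T, hT⟩ : ∃ T : (Fin n → X) → (Fin n → Y) → (Fin n → C) → Prop, ∀ x y z, T x y z ↔
    (∏ i, W (x i, y i) (z i) ≤ A * ∏ i, pC (z i)) ∧ S1 y z ∧ S2 x z ∧
    (∑ i, e1 (x i) (y i) (z i) ≤ n * (d1 + ε)) ∧ ∑ i, e2 (x i) (y i) (z i) ≤ n * (d2 + ε) :=
    ⟨_, fun _ _ _ => Iff.rfl⟩
  have hiid0 : ∀ t, 0 ≤ iid q n t := fun t => Finset.prod_nonneg fun i _ => hq _
  have sumY : ∀ y : Fin n → Y, ∑ x : Fin n → X, iid q n (x, y) = ∏ i, pY (y i) := fun y =>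
    sum_prod_fun (fun i x => q (x, y i))
  have sumX : ∀ x : Fin n → X, ∑ y : Fin n → Y, iid q n (x, y) = ∏ i, pX (x i) := fun x =>
    sum_prod_fun (fun i y => q (x i, y))
  have margY : ∀ G : (Fin n → Y) → ℝ, ∑ t, iid q n t * G t.2 = ∑ y, (∏ i, pY (y i)) * G y := by
    intro G
    rw [Fintype.sum_prod_type, Finset.sum_comm]
    simp only [← Finset.sum_mul, sumY]
  have margX : ∀ G : (Fin n → X) → ℝ, ∑ t, iid q n t * G t.1 = ∑ x, (∏ i, pX (x i)) * G x := by
    intro G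
    rw [Fintype.sum_prod_type]
    simp only [← Finset.sum_mul, sumX]
  have hiid1 : ∑ t, iid q n t = 1 := by
    rw [Fintype.sum_prod_type]
    simp only [sumX]
    rw [sum_prod_fun (fun _ x => pX x)]
    simp [pX, hqq]
  obtain ⟨f, g1, g2, hfg⟩ := one_shot (iid q n) hiid0 hiid1
    (fun t z => ∏ i, W (t.1 i, t.2 i) (z i)) (fun t z => Finset.prod_nonneg fun i _ => hW _ _)
    (fun t => by
      rw [sum_prod_fun (fun i c => W (t.1 i, t.2 i) c)]
      simp [hW1])
    (fun z : Fin n → C => ∏ i, pC (z i)) (fun z => Finset.prod_nonneg fun i _ => hpC0 _)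
    (by rw [sum_prod_fun (fun _ c => pC c)]; simp [hpC1])
    T S1 S2 (fun _ _ _ h => ((hT _ _ _).mp h).2.1) (fun _ _ _ h => ((hT _ _ _).mp h).2.2.1) A hA0
    (fun _ _ _ h => ((hT _ _ _).mp h).1) κ1 κ2
    ((margY (fun y => ∑ z : Fin n → C, (∏ i, pC (z i)) * if S1 y z then (1 : ℝ) else 0)).trans_le
      (kappa_bound pY pC pYC hYC0 hYC1 κ1 (by positivity) S1 (fun y z => (hS1 y z).mp)))
    ((margX (fun x => ∑ z : Fin n → C, (∏ i, pC (z i)) * if S2 x z then (1 : ℝ) else 0)).trans_le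
      (kappa_bound pX pC pXC hXC0 hXC1 κ2 (by positivity) S2 (fun x z => (hS2 x z).mp))) N M hM
  refine ⟨n, M, f, g1, g2, hn0, ?_, ?_⟩
  · have h1 : Real.logb 2 M ≤ 1 + n * (r + 4 * ε) := by
      have := Real.logb_le_logb_of_le (b := 2) (by norm_num) hMR hMle
      rwa [Real.logb_mul (by norm_num) (by positivity), Real.logb_self_eq_one (by norm_num),
        Real.logb_rpow (by norm_num) (by norm_num)] at this
    rw [div_le_iff₀ hnR]
    rw [div_le_iff₀ hnR] at hninv
    nlinarith
  · refine le_trans (Finset.sum_le_sum fun t _ => mul_le_mul_of_nonneg_left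
      (ite_le_ite fun h => ⟨((hT _ _ _).mp h.1).2.2.2, h.2⟩) (hiid0 t)) (hfg.trans ?_)
    have step2 : ∑ t : (Fin n → X) × (Fin n → Y), iid q n t *
        (∑ z, (∏ i, W (t.1 i, t.2 i) (z i)) * (if T t.1 t.2 z then (0 : ℝ) else 1)) ≤
        ρ1 ^ n + ρ2 ^ n + ρ3 ^ n + ρ4 ^ n + ρ5 ^ n := by
      have hmul : ∀ t : (Fin n → X) × (Fin n → Y), iid q n t *
        (∑ z, (∏ i, W (t.1 i, t.2 i) (z i)) * (if T t.1 t.2 z then (0 : ℝ) else 1)) =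
        ∑ z, (∏ i, (q (t.1 i, t.2 i) * W (t.1 i, t.2 i) (z i))) *
          (if T t.1 t.2 z then (0 : ℝ) else 1) := by
        intro t
        rw [Finset.mul_sum]
        refine Finset.sum_congr rfl fun z _ => ?_
        rw [Finset.prod_mul_distrib, ← mul_assoc]; rfl
      simp only [hmul]
      rw [triple_sum (fun x y z => (∏ i, (q (x i, y i) * W (x i, y i) (z i))) *
          (if T x y z then (0 : ℝ) else 1))]
      refine le_trans ?_ (add_le_add (add_le_add (add_le_add (add_le_add (c1 n) (c2 n)) (c3 n))
        (c4 n)) (c5 n))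
      simp only [← Finset.sum_add_distrib]
      refine Finset.sum_le_sum fun s _ => ?_
      simp only [← mul_add]
      refine mul_le_mul_of_nonneg_left ?_ (Finset.prod_nonneg fun i _ => hp _)
      exact ite_union fun h1 h2 h3 h4 h5 =>
        (hT _ _ _).mpr ⟨h1, (hS1 _ _).mpr h2, (hS2 _ _).mpr h3, h4, h5⟩
    have step3 : Real.exp (-(N / A)) ≤ ρ0 ^ n := by
      have h1 : (2 : ℝ) ^ ((n : ℝ) * ε) ≤ N / A := by
        rw [le_div_iff₀ hA0, ← Real.rpow_add (by norm_num)]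
        refine le_trans (le_of_eq ?_) hNge
        congr 1; ring
      have h2 : (0 : ℝ) < (2 : ℝ) ^ ((n : ℝ) * ε) := by positivity
      rw [hρ0n, mul_neg, Real.rpow_neg (by norm_num), Real.exp_neg]
      apply inv_anti₀ h2
      have := Real.add_one_le_exp (N / A : ℝ)
      linarith
    have key : ∀ R : ℝ, J + R ≤ r →
        (N : ℝ) * (2 : ℝ) ^ ((n : ℝ) * (R + ε)) ≤ 2 * ρ0 ^ n * M := by
      intro R hR
      calc (N : ℝ) * (2 : ℝ) ^ ((n : ℝ) * (R + ε))
          ≤ 2 * (2 : ℝ) ^ ((n : ℝ) * (J + 2 * ε)) * (2 : ℝ) ^ ((n : ℝ) * (R + ε)) :=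
            mul_le_mul_of_nonneg_right hNle (by positivity)
        _ = 2 * (2 : ℝ) ^ ((n : ℝ) * (J + R + 3 * ε)) := by
            rw [mul_assoc, ← Real.rpow_add (by norm_num)]; congr 2; ring
        _ ≤ 2 * (2 : ℝ) ^ ((n : ℝ) * (r + 3 * ε)) := by
            apply mul_le_mul_of_nonneg_left _ (by norm_num)
            apply Real.rpow_le_rpow_of_exponent_le (by norm_num)
            apply mul_le_mul_of_nonneg_left _ hnR.le
            linarith
        _ = 2 * ρ0 ^ n * (2 : ℝ) ^ ((n : ℝ) * (r + 4 * ε)) := by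
            rw [hρ0n, mul_assoc, ← Real.rpow_add (by norm_num)]; congr 2; ring
        _ ≤ 2 * ρ0 ^ n * M := mul_le_mul_of_nonneg_left hMge (by positivity)
    have step4 : N * (κ1 + κ2) / M ≤ 4 * ρ0 ^ n := by
      rw [div_le_iff₀ hMR]
      have k1 := key R1 hI1
      have k2 := key R2 hI2
      simp only [κ1, κ2]
      linarith
    linarith

end partC3


section partC4
open TWR

theorem od_achievable {𝒳 𝒴 Xh Yh : Type} [Fintype 𝒳] [Fintype 𝒴] [Fintype Xh] [Fintype Yh]
    (q : 𝒳 × 𝒴 → ℝ) (hq : IsPmf q)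
    (δ1 : 𝒳 → Xh → ℝ) (δ2 : 𝒴 → Yh → ℝ) (d1max d2max : ℝ)
    (hδ1 : ∀ x xh, 0 ≤ δ1 x xh ∧ δ1 x xh ≤ d1max)
    (hδ2 : ∀ y yh, 0 ≤ δ2 y yh ∧ δ2 y yh ≤ d2max)
    (d1 d2 : ℝ) (hd1 : 0 ≤ d1) (hd2 : 0 ≤ d2) (r : ℝ) (hr : r ∈ odSet q δ1 δ2 d1 d2) :
    RDAchievable q δ1 δ2 d1 d2 r := by
  have hr0 := od_nonneg q hq δ1 δ2 d1 d2 r hr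
  obtain ⟨W, hW, ⟨π1, hπ1⟩, ⟨π2, hπ2⟩, hrr⟩ := hr
  intro ε hε
  let D : ℝ := 1 + |d1max| + |d2max|
  have hD : 0 < D := by positivity
  have hD1 : d1max ≤ D := by
    have := le_abs_self d1max
    have := abs_nonneg d2max
    simp only [D]; linarith
  have hD2 : d2max ≤ D := by
    have := le_abs_self d2max
    have := abs_nonneg d1max
    simp only [D]; linarith
  obtain ⟨n, m, f, g1, g2, hn, hm, hf⟩ := code_exists q hq.1 hq.2 W (fun t => (hW t).1)
    (fun t => (hW t).2) (fun x y c => δ1 x (π1 (c, y))) (fun x y c => δ2 y (π2 (c, x))) d1 d2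
    hπ1 hπ2 r hr0 (hrr ▸ le_max_left _ _) (hrr ▸ le_max_right _ _) (ε / 5) (ε / (2 * D))
    (by positivity) (by positivity)
  have hnR : (0 : ℝ) < n := by exact_mod_cast hn
  have hiid0 : ∀ t, 0 ≤ iid q n t := fun t => Finset.prod_nonneg fun i _ => hq.1 _
  have hiid1 : ∑ t, iid q n t = 1 := by
    rw [Fintype.sum_prod_type]
    have : ∀ x : Fin n → 𝒳, ∑ y : Fin n → 𝒴, iid q n (x, y) = ∏ i, ∑ y, q (x i, y) := fun x =>
      sum_prod_fun (fun i y => q (x i, y))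
    simp only [this]
    rw [sum_prod_fun (fun _ x => ∑ y, q (x, y))]
    rw [← Fintype.sum_prod_type', hq.2]
    simp
  have fin : ∀ (G : (Fin n → 𝒳) × (Fin n → 𝒴) → ℝ) (d : ℝ) (P : (Fin n → 𝒳) × (Fin n → 𝒴) → Prop)
      (_ : ∀ t, Decidable (P t)), 0 ≤ d →
      (∑ t, iid q n t * (if P t then (0 : ℝ) else 1) ≤ ε / (2 * D)) →
      (∀ t, G t ≤ D) → (∀ t, P t → G t ≤ d + ε / 5) → ∑ t, iid q n t * G t ≤ d + ε := by
    intro G d P inst hd hP hG hPG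
    have h1 : ∀ t, iid q n t * G t ≤ iid q n t * (d + ε / 5) +
        D * (iid q n t * (if P t then (0 : ℝ) else 1)) := by
      intro t
      have h2 : G t ≤ (d + ε / 5) + D * (if P t then (0 : ℝ) else 1) := by
        split_ifs with h
        · linarith [hPG t h]
        · linarith [hG t]
      have := mul_le_mul_of_nonneg_left h2 (hiid0 t)
      linarith
    have h2 := Finset.sum_le_sum fun t (_ : t ∈ Finset.univ) => h1 t
    rw [Finset.sum_add_distrib, ← Finset.sum_mul, ← Finset.mul_sum, hiid1, one_mul] at h2
    have h3 := mul_le_mul_of_nonneg_left hP hD.le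
    have h4 : D * (ε / (2 * D)) = ε / 2 := by field_simp
    linarith
  have avg : ∀ (a : Fin n → ℝ) (b : ℝ), ∑ i, a i ≤ n * b → (n : ℝ)⁻¹ * ∑ i, a i ≤ b := by
    intro a b h
    rw [inv_mul_le_iff₀ hnR]; exact h
  have avgD : ∀ (a : Fin n → ℝ) (b : ℝ), (∀ i, a i ≤ b) → (n : ℝ)⁻¹ * ∑ i, a i ≤ b := by
    intro a b h
    apply avg
    refine (Finset.sum_le_sum fun i _ => h i).trans ?_
    simp
  refine ⟨n, m, f, fun s i => π1 (g1 s i, s.2 i), fun s i => π2 (g2 s i, s.2 i), hn, by linarith,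
    ?_, ?_⟩
  · exact fin _ d1 _ _ hd1 hf (fun t => avgD _ _ fun i => (hδ1 _ _).2.trans hD1)
      (fun t h => avg _ _ h.1.1)
  · exact fin _ d2 _ _ hd2 hf (fun t => avgD _ _ fun i => (hδ2 _ _).2.trans hD2)
      (fun t h => avg _ _ (by have h2 := h.1.2; rw [h.2] at h2; exact h2))

end partC4

open TWR in
/-- Lemma 2: `R(d1,d2) ≤ R_U*(d1,d2) ≤
max{R^{WZ}_{X|Y}(d1), R^{WZ}_{Y|X}(d2)}`: the one-description upper bound is at
least as tight as the compress-linear upper bound. -/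
theorem one_description_vs_compress_linear
    {𝒳 𝒴 Xh Yh : Type} [Fintype 𝒳] [Fintype 𝒴] [Fintype Xh] [Fintype Yh]
    (q : 𝒳 × 𝒴 → ℝ) (hq : IsPmf q)
    (δ1 : 𝒳 → Xh → ℝ) (δ2 : 𝒴 → Yh → ℝ) (d1max d2max : ℝ)
    (hδ1 : ∀ x xh, 0 ≤ δ1 x xh ∧ δ1 x xh ≤ d1max)
    (hδ2 : ∀ y yh, 0 ≤ δ2 y yh ∧ δ2 y yh ≤ d2max)
    (hδ1n : ∀ x, ∃ xh, δ1 x xh = 0) (hδ2n : ∀ y, ∃ yh, δ2 y yh = 0)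
    (d1 d2 : ℝ) (hd1 : 0 ≤ d1) (hd2 : 0 ≤ d2) :
    RD q δ1 δ2 d1 d2 ≤ oneDescUB q δ1 δ2 d1 d2 ∧
    oneDescUB q δ1 δ2 d1 d2 ≤ max (wzRD q δ1 d1) (wzRD (swap q) δ2 d2) := by
  have hod := od_nonempty q hq δ1 δ2 d1 d2 hδ1n hδ2n hd1 hd2
  refine ⟨?_, hod.2⟩
  refine le_csInf hod.1 fun r hr => csInf_le ⟨0, fun s hs => hs.1⟩
    ⟨od_nonneg q hq δ1 δ2 d1 d2 r hr,
      od_achievable q hq δ1 δ2 d1max d2max hδ1 hδ2 d1 d2 hd1 hd2 r hr⟩
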